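/- arXiv:1701.00787 — 2 statements merged into one kernel-verified Lean document; each statement's English description precedes it below -/
import Mathlib

section
/- Let α, β ∈ ℕ (nonnegative integers) with max{α, β} > 0, and let δ be a real number with δ ≥ α + 1. Then there exists a constant c > 0 such that for every integer n ≥ 1 and every t ∈ (0, π], |F_n^{(α,β),δ}(t)| ≤ c · n^{-α-5/2}. -/
open MeasureTheory Real Set

/-- Generalized binomial coefficient `C(u, v) = Γ(u+1) / (Γ(v+1) Γ(u-v+1))`. -/
noncomputable def genBinom (u v : ℝ) : ℝ :=
  Real.Gamma (u + 1) / (Real.Gamma (v + 1) * Real.Gamma (u - v + 1))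

/-- Jacobi polynomial `P_n^{(a,b)}(x)`. -/
noncomputable def jacobiP (n : ℕ) (a b x : ℝ) : ℝ :=
  ∑ k ∈ Finset.range (n + 1),
    genBinom ((n : ℝ) + a) ((n : ℝ) - (k : ℝ)) * genBinom ((n : ℝ) + b) (k : ℝ) *
      ((x - 1) / 2) ^ k * ((x + 1) / 2) ^ (n - k)

/-- `F_n^{(α,β),δ}(t)`. -/
noncomputable def FJ (n : ℕ) (α β δ t : ℝ) : ℝ :=
  ∫ θ in (0:ℝ)..t, (t - θ) ^ δ * jacobiP n (α - 1/2) (β - 1/2) (Real.cos θ) *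
    (Real.sin (θ / 2)) ^ (2 * α) * (Real.cos (θ / 2)) ^ (2 * β)

/-!
Consecutive Jacobi polynomials satisfy contiguity relations
`F_n^{(α+1,β)} = u_n F_n^{(α,β)} - v_n F_{n+1}^{(α,β)}` and
`F_n^{(α,β+1)} = w_n F_n^{(α,β)} + v_n F_{n+1}^{(α,β)}`, where `u_n`, `v_n` and `w_n` are rational
functions of `n` tending to `1 / 2`. Raising `β` therefore preserves any bound, while raising `α`
amounts to a forward difference in `n`: it gains a factor `n⁻¹` provided the differences of
`F_n^{(α,β)}` are known to decay as those of a symbol in `n` do. So the whole statement reduces to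
`α = β = 0`, with control of `α` differences.

There the Jacobi polynomials are multiples of Chebyshev polynomials: `F_n^{(0,0)}` is `p_n`, of
order `n ^ (-1/2)`, times the integral of `(t - θ) ^ δ * cos (n θ)`. The first integration by parts
has no boundary term, as `sin 0 = 0`, so a second one gives order `n⁻²`. Each further integration
by parts produces a boundary term that is an exact power of `n`, hence has all its differences
under control, and a remainder with one more factor `n⁻¹`, which absorbs one difference. The
assumption `α + 1 ≤ δ` permits exactly as many integrations by parts as needed.
-/

section Symbol

open Asymptotics Filter

variable {X E F : Type*} [NormedAddCommGroup E] [NormedAddCommGroup F]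
  {S : Set X} {k : ℕ} {s r : ℝ}

/-- A family `f n x` is a *symbol* of order `s` and regularity `k`, uniformly in `x ∈ S`, if its
`i`-th forward difference in `n` is `O(n ^ (s - i))` for all `i ≤ k`. This is the discrete analogue
of the symbol classes of pseudodifferential calculus. The index `n = 0` is left out, as `0 ^ s` is
a junk value for `s < 0`. -/
def IsSymbol (S : Set X) (k : ℕ) (s : ℝ) (f : ℕ → X → E) : Prop :=
  ∀ i ≤ k, (fun p : ℕ × X ↦ (fwdDiff 1)^[i] f p.1 p.2) =O[𝓟 (Ici 1 ×ˢ S)]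
    fun p ↦ (p.1 : ℝ) ^ (s - i)

lemma isSymbol_zero_iff {f : ℕ → X → E} :
    IsSymbol S 0 s f ↔ ∃ C, ∀ n : ℕ, 1 ≤ n → ∀ x ∈ S, ‖f n x‖ ≤ C * (n : ℝ) ^ s := by
  have norm_rpow (n : ℕ) : ‖(n : ℝ) ^ s‖ = (n : ℝ) ^ s := Real.norm_of_nonneg (by positivity)
  simp only [IsSymbol, nonpos_iff_eq_zero, forall_eq, Function.iterate_zero, id_eq, Nat.cast_zero,
    sub_zero, isBigO_principal, norm_rpow, mem_prod, mem_Ici, Prod.forall, and_imp]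
  exact ⟨fun ⟨C, h⟩ ↦ ⟨C, fun n hn x hx ↦ h n x hn hx⟩,
    fun ⟨C, h⟩ ↦ ⟨C, fun n x hn hx ↦ h n hn x hx⟩⟩

lemma isSymbol_succ_iff {f : ℕ → X → E} :
    IsSymbol S (k + 1) s f ↔ IsSymbol S 0 s f ∧ IsSymbol S k (s - 1) (fwdDiff 1 f) := by
  have order_eq (i : ℕ) : s - (i + 1 : ℕ) = s - 1 - i := by push_cast; ring
  refine ⟨fun h ↦ ⟨fun i hi ↦ h i (hi.trans k.succ.zero_le), fun i hi ↦ ?_⟩, fun ⟨h₀, h⟩ i hi ↦ ?_⟩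
  · simpa only [order_eq, Function.iterate_succ_apply] using h (i + 1) (by lia)
  · cases i with
    | zero => exact h₀ 0 le_rfl
    | succ i => simpa only [order_eq, Function.iterate_succ_apply] using h i (by lia)

lemma natCast_add_one_rpow_le {n : ℕ} (hn : 1 ≤ n) (s : ℝ) :
    ((n + 1 : ℕ) : ℝ) ^ s ≤ 2 ^ |s| * (n : ℝ) ^ s := by
  have hn' : (1 : ℝ) ≤ n := by exact_mod_cast hn
  push_cast
  rcases le_total 0 s with hs | hs
  · rw [abs_of_nonneg hs, ← Real.mul_rpow (by norm_num) (by positivity)]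
    exact Real.rpow_le_rpow (by positivity) (by linarith) hs
  · calc ((n : ℝ) + 1) ^ s ≤ (n : ℝ) ^ s :=
          Real.rpow_le_rpow_of_nonpos (by positivity) (by linarith) hs
      _ ≤ 2 ^ |s| * (n : ℝ) ^ s :=
          le_mul_of_one_le_left (by positivity) (Real.one_le_rpow (by norm_num) (abs_nonneg s))

namespace IsSymbol

lemma mono_regularity {l : ℕ} {f : ℕ → X → E} (hf : IsSymbol S k s f) (hl : l ≤ k) :
    IsSymbol S l s f :=
  fun i hi ↦ hf i (hi.trans hl)

lemma mono_order {f : ℕ → X → E} (hf : IsSymbol S k s f) (hsr : s ≤ r) : IsSymbol S k r f := by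
  refine fun i hi ↦ (hf i hi).trans (isBigO_principal.2 ⟨1, fun p hp ↦ ?_⟩)
  have hn : (1 : ℝ) ≤ p.1 := by exact_mod_cast hp.1
  rw [one_mul, Real.norm_of_nonneg (by positivity), Real.norm_of_nonneg (by positivity)]
  gcongr

lemma congr {f g : ℕ → X → E} (hf : IsSymbol S k s f)
    (hfg : ∀ n, 1 ≤ n → ∀ x ∈ S, f n x = g n x) : IsSymbol S k s g := by
  refine fun i hi ↦ (hf i hi).congr' (eventually_principal.2 fun p hp ↦ ?_) .rfl
  simp only [fwdDiff_iter_eq_sum_shift, Finset.sum_apply, Pi.smul_apply]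
  exact Finset.sum_congr rfl fun j _ ↦ by rw [hfg _ (Nat.le_add_right_of_le hp.1) _ hp.2]

lemma add {f g : ℕ → X → E} (hf : IsSymbol S k s f) (hg : IsSymbol S k s g) :
    IsSymbol S k s (fun n x ↦ f n x + g n x) := by
  intro i hi
  change (fun p : ℕ × X ↦ (fwdDiff 1)^[i] (f + g) p.1 p.2) =O[_] _
  rw [fwdDiff_iter_add]
  exact (hf i hi).add (hg i hi)

lemma clm_comp [NormedSpace ℝ E] [NormedSpace ℝ F] {f : ℕ → X → E} (L : E →L[ℝ] F)
    (hf : IsSymbol S k s f) : IsSymbol S k s (fun n x ↦ L (f n x)) := by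
  intro i hi
  have : (fwdDiff 1)^[i] (fun n x ↦ L (f n x)) = fun n x ↦ L ((fwdDiff 1)^[i] f n x) := by
    ext n x
    simp [fwdDiff_iter_eq_sum_shift]
  simpa only [this] using (L.isBigO_comp _ _).trans (hf i hi)

lemma const_smul [NormedSpace ℝ E] {f : ℕ → X → E} (c : ℝ) (hf : IsSymbol S k s f) :
    IsSymbol S k s (fun n x ↦ c • f n x) :=
  hf.clm_comp (c • .id ℝ E)

lemma sub [NormedSpace ℝ E] {f g : ℕ → X → E} (hf : IsSymbol S k s f) (hg : IsSymbol S k s g) :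
    IsSymbol S k s (fun n x ↦ f n x - g n x) := by
  simpa [sub_eq_add_neg] using hf.add (hg.const_smul (-1))

lemma comp_add_one {f : ℕ → X → E} (hf : IsSymbol S k s f) :
    IsSymbol S k s (fun n ↦ f (n + 1)) := by
  intro i hi
  obtain ⟨C, hC₀, hC⟩ := (hf i hi).exists_nonneg
  rw [isBigOWith_principal] at hC
  refine isBigO_principal.2 ⟨C * 2 ^ |s - i|, fun p hp ↦ ?_⟩
  have hn := hC (p.1 + 1, p.2) ⟨Nat.le_add_right_of_le hp.1, hp.2⟩
  rw [Real.norm_of_nonneg (by positivity)] at hn ⊢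
  rw [fwdDiff_iter_comp_add, mul_assoc]
  exact hn.trans (mul_le_mul_of_nonneg_left (natCast_add_one_rpow_le hp.1 _) hC₀)

lemma succ_of_order_sub_one [NormedSpace ℝ E] {f : ℕ → X → E} (hf : IsSymbol S k (s - 1) f) :
    IsSymbol S (k + 1) s f :=
  isSymbol_succ_iff.2
    ⟨(hf.mono_regularity k.zero_le).mono_order (by linarith), hf.comp_add_one.sub hf⟩

lemma smul_zero_regularity [NormedSpace ℝ E] {f : ℕ → X → ℝ} {g : ℕ → X → E}
    (hf : IsSymbol S 0 s f) (hg : IsSymbol S 0 r g) :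
    IsSymbol S 0 (s + r) (fun n x ↦ f n x • g n x) := by
  rintro i hi
  obtain rfl : i = 0 := by lia
  refine ((hf 0 le_rfl).smul (hg 0 le_rfl)).congr' .rfl (eventually_principal.2 fun p hp ↦ ?_)
  have hn : (0 : ℝ) < p.1 := by exact_mod_cast Nat.lt_of_succ_le hp.1
  simp [Real.rpow_add hn]

lemma smul [NormedSpace ℝ E] {f : ℕ → X → ℝ} {g : ℕ → X → E} (hf : IsSymbol S k s f)
    (hg : IsSymbol S k r g) : IsSymbol S k (s + r) (fun n x ↦ f n x • g n x) := by
  induction k generalizing s r f g with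
  | zero => exact hf.smul_zero_regularity hg
  | succ k ih =>
    obtain ⟨hf₀, hf'⟩ := isSymbol_succ_iff.1 hf
    obtain ⟨hg₀, hg'⟩ := isSymbol_succ_iff.1 hg
    have leibniz : fwdDiff 1 (fun n x ↦ f n x • g n x) = fun n x ↦
        (fwdDiff 1 f n x • g n x + f n x • fwdDiff 1 g n x)
          + fwdDiff 1 f n x • fwdDiff 1 g n x := by
      ext n x
      exact congrFun (fwdDiff_smul 1 (f · x) (g · x)) n
    refine isSymbol_succ_iff.2 ⟨hf₀.smul_zero_regularity hg₀, leibniz ▸ .add (.add ?_ ?_) ?_⟩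
    · exact (ih hf' (hg.mono_regularity k.le_succ)).mono_order (by linarith)
    · exact (ih (hf.mono_regularity k.le_succ) hg').mono_order (by linarith)
    · exact (ih hf' hg').mono_order (by linarith)

end IsSymbol

lemma isSymbol_const {g : X → E} {C : ℝ} (hg : ∀ x ∈ S, ‖g x‖ ≤ C) (k : ℕ) :
    IsSymbol S k 0 (fun _ ↦ g) := by
  have fwdDiff_iter_zero (i : ℕ) : (fwdDiff 1)^[i] (fun _ ↦ 0 : ℕ → X → E) = fun _ ↦ 0 :=
    Function.iterate_fixed (fwdDiff_const 1 0) i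
  rintro (_ | i) -
  · exact isBigO_principal.2 ⟨C, fun p hp ↦ by simpa using hg p.2 hp.2⟩
  · rw [Function.iterate_succ_apply, fwdDiff_const, fwdDiff_iter_zero]
    exact isBigO_zero _ _

lemma isSymbol_inv_natCast_add (S : Set X) (k : ℕ) {c : ℝ} (hc : -1 < c) :
    IsSymbol S k (-1) (fun n _ ↦ ((n : ℝ) + c)⁻¹) := by
  induction k generalizing c with
  | zero =>
    refine isSymbol_zero_iff.2 ⟨(min 1 (1 + c))⁻¹, fun n hn _ _ ↦ ?_⟩
    have hn' : (1 : ℝ) ≤ n := by exact_mod_cast hn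
    have hmin : 0 < min 1 (1 + c) := lt_min one_pos (by linarith)
    have lower : min 1 (1 + c) * n ≤ n + c := by
      rcases le_total 0 c with h | h
      · rw [min_eq_left (by linarith)]; linarith
      · rw [min_eq_right (by linarith)]; nlinarith
    rw [Real.rpow_neg_one, ← mul_inv, norm_inv, Real.norm_of_nonneg (by linarith)]
    exact inv_anti₀ (by positivity) lower
  | succ k ih =>
    refine isSymbol_succ_iff.2 ⟨(ih hc).mono_regularity k.zero_le, ?_⟩
    have product := ((ih (c := c + 1) (by linarith)).smul (ih hc)).const_smul (-1)
    refine (product.mono_order (by norm_num)).congr fun n hn _ _ ↦ ?_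
    have hn' : (1 : ℝ) ≤ n := by exact_mod_cast hn
    have h₀ : (n : ℝ) + c ≠ 0 := by linarith
    have h₁ : (n : ℝ) + 1 + c ≠ 0 := by linarith
    have h₂ : (n : ℝ) + (c + 1) ≠ 0 := by linarith
    simp only [fwdDiff, Pi.sub_apply, smul_eq_mul]
    push_cast
    field_simp
    ring

lemma isSymbol_ratio (S : Set X) (k : ℕ) (a : ℝ) {c : ℝ} (hc : -2 < c) :
    IsSymbol S k 0 (fun n _ ↦ ((n : ℝ) + a) / (2 * n + c)) := by
  have half := isSymbol_const (S := S) (g := fun _ ↦ (1 / 2 : ℝ)) (fun _ _ ↦ le_rfl) k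
  have tail := (isSymbol_inv_natCast_add S k (c := c / 2) (by linarith)).const_smul (a / 2 - c / 4)
  refine (half.add (tail.mono_order (by norm_num))).congr fun n hn _ _ ↦ ?_
  have hn' : (1 : ℝ) ≤ n := by exact_mod_cast hn
  have hD : 2 * (n : ℝ) + c ≠ 0 := by linarith
  simp only [smul_eq_mul]
  field_simp
  ring

namespace IsSymbol

variable [NormedSpace ℝ E] {f : ℕ → X → E} {c : ℝ}

lemma ratio_smul_add_ratio_smul (hf : IsSymbol S k s f) (a b : ℝ) (hc : -2 < c) :
    IsSymbol S k s (fun n x ↦ (((n : ℝ) + a) / (2 * n + c)) • f n x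
      + (((n : ℝ) + b) / (2 * n + c)) • f (n + 1) x) := by
  simpa only [zero_add] using
    ((isSymbol_ratio S k a hc).smul hf).add ((isSymbol_ratio S k b hc).smul hf.comp_add_one)

lemma ratio_smul_sub_ratio_smul (hf : IsSymbol S (k + 1) s f) (a b : ℝ) (hc : -2 < c) :
    IsSymbol S k (s - 1) (fun n x ↦ (((n : ℝ) + a) / (2 * n + c)) • f n x
      - (((n : ℝ) + b) / (2 * n + c)) • f (n + 1) x) := by
  have weight_gap := ((isSymbol_inv_natCast_add S k (c := c / 2) (by linarith)).const_smul
    ((a - b) / 2)).smul (hf.mono_regularity k.le_succ)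
  have difference := (isSymbol_ratio S k b hc).smul (isSymbol_succ_iff.1 hf).2
  refine ((weight_gap.mono_order (by linarith)).sub (difference.mono_order (by linarith))).congr
    fun n hn x _ ↦ ?_
  have hn' : (1 : ℝ) ≤ n := by exact_mod_cast hn
  have hD : 2 * (n : ℝ) + c ≠ 0 := by linarith
  have gap : (a - b) / 2 * ((n : ℝ) + c / 2)⁻¹ = (n + a) / (2 * n + c) - (n + b) / (2 * n + c) := by
    field_simp
    ring
  simp only [smul_eq_mul, gap, fwdDiff, Pi.sub_apply, smul_sub, sub_smul]
  abel

end IsSymbol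

end Symbol

section BinomialSeries

open PowerSeries

variable {R : Type*} [CommRing R]

lemma coeff_X_mul_derivative (n : ℕ) (f : R⟦X⟧) : coeff n (X * d⁄dX R f) = n * coeff n f := by
  cases n with
  | zero => simp
  | succ n => rw [coeff_succ_X_mul, coeff_derivative, mul_comm, Nat.cast_succ]

variable [BinomialRing R]

lemma natCast_add_one_mul_choose_succ (r : R) (k : ℕ) :
    ((k : R) + 1) * Ring.choose r (k + 1) = Ring.choose r k * (r - k) := by
  have h := Ring.choose_smul_choose r k.le_succ
  rwa [Nat.choose_succ_self_right, Nat.succ_sub (le_refl k), Nat.sub_self, Ring.choose_one_right,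
    nsmul_eq_mul, Nat.cast_succ] at h

lemma natCast_add_one_mul_add_one_choose_succ (r : R) (k : ℕ) :
    ((k : R) + 1) * Ring.choose (r + 1) (k + 1) = (r + 1) * Ring.choose r k := by
  have h := Ring.choose_smul_choose (r + 1) (Nat.le_add_left 1 k)
  rwa [Nat.choose_one_right, Ring.choose_one_right, Nat.cast_one, add_sub_cancel_right,
    Nat.add_sub_cancel, nsmul_eq_mul, Nat.cast_succ] at h

lemma rescale_binomialSeries_add_one (z r : R) :
    rescale z (binomialSeries R (r + 1)) = (1 + C z * X) * rescale z (binomialSeries R r) := by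
  have one_series : binomialSeries R (1 : R) = 1 + X := by
    simpa using binomialSeries_nat (R := R) (A := R) 1
  rw [binomialSeries_add, one_series, mul_comm, map_mul, map_add, map_one, rescale_X]

lemma derivative_rescale_binomialSeries_add_one (z r : R) :
    d⁄dX R (rescale z (binomialSeries R (r + 1)))
      = C ((r + 1) * z) * rescale z (binomialSeries R r) := by
  ext n
  simp only [coeff_derivative, coeff_rescale, binomialSeries_coeff, coeff_C_mul, smul_eq_mul,
    mul_one]
  linear_combination z ^ (n + 1) * natCast_add_one_mul_add_one_choose_succ r n

/-- The power series `(1 + z X) ^ N * (1 + y X) ^ M`. For `N = n + a`, `M = n + b`,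
`y = (x - 1) / 2` and `z = (x + 1) / 2`, its coefficient of `X ^ n` is the Jacobi polynomial
`P_n^{(a,b)}(x)`. -/
noncomputable def jacobiSeries (N M y z : R) : R⟦X⟧ :=
  rescale z (binomialSeries R N) * rescale y (binomialSeries R M)

lemma jacobiSeries_swap (N M y z : R) : jacobiSeries N M y z = jacobiSeries M N z y :=
  mul_comm _ _

lemma derivative_jacobiSeries (N M y z : R) :
    d⁄dX R (jacobiSeries (N + 1) (M + 1) y z) = C ((N + 1) * (z - y)) * jacobiSeries N M y z
      + C ((N + M + 2) * y) * jacobiSeries (N + 1) M y z := by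
  rw [jacobiSeries, Derivation.leibniz, derivative_rescale_binomialSeries_add_one,
    derivative_rescale_binomialSeries_add_one]
  simp only [jacobiSeries, rescale_binomialSeries_add_one, map_mul, map_add, map_sub, map_one,
    map_ofNat, smul_eq_mul]
  ring

lemma coeff_succ_jacobiSeries (n : ℕ) (N M y z : R) :
    ((n : R) + 1) * coeff (n + 1) (jacobiSeries (N + 1) (M + 1) y z)
      = (N + 1) * (z - y) * coeff n (jacobiSeries N M y z)
        + (N + M + 2) * y * coeff n (jacobiSeries (N + 1) M y z) := by
  have h := congrArg (coeff n) (derivative_jacobiSeries N M y z)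
  rwa [coeff_derivative, map_add, coeff_C_mul, coeff_C_mul, mul_comm] at h

lemma jacobiSeries_add_one_self (N y z : R) :
    jacobiSeries (N + 1) (N + 1) y z
      = (1 + C z * X) * (1 + C y * X) * jacobiSeries N N y z := by
  simp only [jacobiSeries, rescale_binomialSeries_add_one]
  ring

lemma derivative_jacobiSeries_self (N y z : R) :
    d⁄dX R (jacobiSeries (N + 1) (N + 1) y z)
      = C (N + 1) * (C (y + z) * jacobiSeries N N y z
        + C (2 * (y * z)) * (X * jacobiSeries N N y z)) := by
  rw [derivative_jacobiSeries]
  simp only [jacobiSeries, rescale_binomialSeries_add_one, map_mul, map_add, map_sub, map_one,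
    map_ofNat]
  ring

lemma coeff_succ_jacobiSeries_self (n : ℕ) (N y z : R) :
    ((n : R) + 1) * coeff (n + 1) (jacobiSeries (N + 1) (N + 1) y z)
      = (N + 1) * ((y + z) * coeff n (jacobiSeries N N y z)
        + 2 * (y * z) * coeff n (X * jacobiSeries N N y z)) := by
  have h := congrArg (coeff n) (derivative_jacobiSeries_self N y z)
  rwa [coeff_derivative, coeff_C_mul, map_add, coeff_C_mul, coeff_C_mul, mul_comm] at h

lemma coeff_jacobiSeries_add_one_self (n : ℕ) (N y z : R) :
    (2 * (N + 1) - n) * coeff n (jacobiSeries (N + 1) (N + 1) y z)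
      = (N + 1) * (2 * coeff n (jacobiSeries N N y z)
        + (y + z) * coeff n (X * jacobiSeries N N y z)) := by
  have euler : C (2 * (N + 1)) * jacobiSeries (N + 1) (N + 1) y z
      - X * d⁄dX R (jacobiSeries (N + 1) (N + 1) y z)
      = C (N + 1) * (C 2 * jacobiSeries N N y z + C (y + z) * (X * jacobiSeries N N y z)) := by
    rw [derivative_jacobiSeries_self, jacobiSeries_add_one_self]
    simp only [map_mul, map_add, map_one, map_ofNat]
    ring
  have h := congrArg (coeff n) euler
  rwa [map_sub, coeff_C_mul, coeff_X_mul_derivative, ← sub_mul, coeff_C_mul, map_add, coeff_C_mul,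
    coeff_C_mul] at h

end BinomialSeries

section Jacobi

open PowerSeries

lemma genBinom_natCast {u : ℝ} {k : ℕ} (h : -1 < u - k) : genBinom u k = Ring.choose u k := by
  induction k with
  | zero =>
    have hu : 0 < u + 1 := by simpa [neg_lt_iff_pos_add] using h
    simp [genBinom, (Real.Gamma_pos_of_pos hu).ne']
  | succ k ih =>
    push_cast at h
    have hu : 0 < u - k := by linarith
    have hk : (0 : ℝ) < k + 1 := by positivity
    have hΓu := (Real.Gamma_pos_of_pos hu).ne'
    have hΓk := (Real.Gamma_pos_of_pos hk).ne'
    refine mul_left_cancel₀ hk.ne' ?_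
    rw [natCast_add_one_mul_choose_succ, ← ih (by linarith), genBinom, genBinom, Nat.cast_succ,
      show u - ((k : ℝ) + 1) + 1 = u - k by ring, Real.Gamma_add_one hk.ne',
      Real.Gamma_add_one hu.ne']
    field_simp

variable (n : ℕ) {a b : ℝ} (x : ℝ)

lemma jacobiP_eq_coeff (ha : -1 < a) (hb : -1 < b) :
    jacobiP n a b x = coeff n (jacobiSeries (n + a) (n + b) ((x - 1) / 2) ((x + 1) / 2)) := by
  rw [jacobiSeries_swap, jacobiSeries, coeff_mul, Finset.Nat.sum_antidiagonal_eq_sum_range_succ_mk,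
    jacobiP]
  refine Finset.sum_congr rfl fun k hk ↦ ?_
  have hkn : k ≤ n := Nat.lt_succ_iff.1 (Finset.mem_range.1 hk)
  have hkn' : (k : ℝ) ≤ n := by exact_mod_cast hkn
  rw [← Nat.cast_sub hkn, genBinom_natCast (by rw [Nat.cast_sub hkn]; linarith),
    genBinom_natCast (by linarith)]
  simp only [coeff_rescale, binomialSeries_coeff, smul_eq_mul, mul_one]
  ring

lemma jacobiP_add_one_left (ha : -1 < a) (hb : -1 < b) :
    (2 * n + a + b + 2) * ((1 - x) / 2) * jacobiP n (a + 1) b x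
      = (n + a + 1) * jacobiP n a b x - (n + 1) * jacobiP (n + 1) a b x := by
  have h := coeff_succ_jacobiSeries n (n + a) (n + b) ((x - 1) / 2) ((x + 1) / 2)
  rw [jacobiP_eq_coeff n x ha hb, jacobiP_eq_coeff (n + 1) x ha hb,
    jacobiP_eq_coeff n x (by linarith) hb, Nat.cast_succ, add_right_comm (n : ℝ) 1 a,
    add_right_comm (n : ℝ) 1 b, ← add_assoc _ a]
  linear_combination h

lemma jacobiP_add_one_right (ha : -1 < a) (hb : -1 < b) :
    (2 * n + a + b + 2) * ((1 + x) / 2) * jacobiP n a (b + 1) x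
      = (n + b + 1) * jacobiP n a b x + (n + 1) * jacobiP (n + 1) a b x := by
  have h := coeff_succ_jacobiSeries n (n + b) (n + a) ((x + 1) / 2) ((x - 1) / 2)
  rw [jacobiP_eq_coeff n x ha hb, jacobiP_eq_coeff (n + 1) x ha hb,
    jacobiP_eq_coeff n x ha (by linarith), Nat.cast_succ, add_right_comm (n : ℝ) 1 a,
    add_right_comm (n : ℝ) 1 b, ← add_assoc _ b, jacobiSeries_swap (n + a + 1),
    jacobiSeries_swap (n + a), jacobiSeries_swap (n + a)]
  linear_combination -h

open Polynomial.Chebyshev in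
lemma coeff_jacobiSeries_neg_half :
    coeff n (jacobiSeries (n - 1 / 2 : ℝ) (n - 1 / 2) ((x - 1) / 2) ((x + 1) / 2))
        = Ring.choose (n - 1 / 2 : ℝ) n * (T ℝ n).eval x ∧
      coeff n (X * jacobiSeries (n - 1 / 2 : ℝ) (n - 1 / 2) ((x - 1) / 2) ((x + 1) / 2))
        = Ring.choose (n - 1 / 2 : ℝ) n * (2 * (U ℝ (n - 1)).eval x) := by
  induction n with
  | zero => simp [jacobiSeries, coeff_mul, -coeff_zero_eq_constantCoeff]
  | succ n ih =>
    obtain ⟨ihT, ihU⟩ := ih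
    have hn : ((n : ℝ) + 1) ≠ 0 := by positivity
    have hT := coeff_succ_jacobiSeries_self n (n - 1 / 2 : ℝ) ((x - 1) / 2) ((x + 1) / 2)
    have hU := coeff_jacobiSeries_add_one_self n (n - 1 / 2 : ℝ) ((x - 1) / 2) ((x + 1) / 2)
    have hp := natCast_add_one_mul_add_one_choose_succ (n - 1 / 2 : ℝ) n
    have T_rec : (T ℝ (n + 1)).eval x
        = x * (T ℝ n).eval x - (1 - x ^ 2) * (U ℝ (n - 1)).eval x := by
      have h := congrArg (Polynomial.eval x) (T_eq_X_mul_T_sub_pol_U ℝ (n - 1))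
      rw [sub_add_cancel, show (n : ℤ) - 1 + 2 = n + 1 by ring] at h
      simpa using h
    have U_rec : (U ℝ n).eval x = x * (U ℝ (n - 1)).eval x + (T ℝ n).eval x := by
      simpa using congrArg (Polynomial.eval x) (U_eq_X_mul_U_add_T ℝ (n - 1))
    rw [ihT, ihU] at hT hU
    rw [coeff_succ_X_mul, Nat.cast_succ, Nat.cast_succ, add_sub_cancel_right, T_rec, U_rec,
      add_sub_right_comm]
    constructor <;> refine mul_left_cancel₀ hn ?_
    · linear_combination hT
        - (x * (T ℝ n).eval x - (1 - x ^ 2) * (U ℝ (n - 1)).eval x) * hp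
    · linear_combination hU
        - 2 * (x * (U ℝ (n - 1)).eval x + (T ℝ n).eval x) * hp

lemma jacobiP_neg_half :
    jacobiP n (-1 / 2) (-1 / 2) x
      = Ring.choose (n - 1 / 2 : ℝ) n * (Polynomial.Chebyshev.T ℝ n).eval x := by
  rw [jacobiP_eq_coeff n x (by norm_num) (by norm_num), neg_div, ← sub_eq_add_neg]
  exact (coeff_jacobiSeries_neg_half n x).1

end Jacobi

lemma choose_sub_half_succ (n : ℕ) :
    ((n : ℝ) + 1) * Ring.choose ((n + 1 : ℕ) - 1 / 2 : ℝ) (n + 1)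
      = (n + 1 / 2) * Ring.choose (n - 1 / 2 : ℝ) n := by
  have h := natCast_add_one_mul_add_one_choose_succ (n - 1 / 2 : ℝ) n
  push_cast
  rw [show (n : ℝ) - 1 / 2 + 1 = n + 1 / 2 by ring] at h
  rwa [show (n : ℝ) + 1 - 1 / 2 = n + 1 / 2 by ring]

lemma choose_sub_half_sq_mul_le (n : ℕ) :
    Ring.choose (n - 1 / 2 : ℝ) n ^ 2 * (2 * n + 1) ≤ 1 := by
  induction n with
  | zero => simp
  | succ n ih =>
    have hn : (0 : ℝ) < n + 1 := by positivity
    have ratio : Ring.choose ((n + 1 : ℕ) - 1 / 2 : ℝ) (n + 1)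
        = (n + 1 / 2) / (n + 1) * Ring.choose (n - 1 / 2 : ℝ) n := by
      rw [div_mul_eq_mul_div, eq_div_iff hn.ne', mul_comm, choose_sub_half_succ]
    have decrease : ((n + 1 / 2 : ℝ) / (n + 1)) ^ 2 * (2 * (n + 1 : ℕ) + 1) ≤ 2 * n + 1 := by
      push_cast
      rw [div_pow, div_mul_eq_mul_div, div_le_iff₀ (by positivity)]
      nlinarith [sq_nonneg (n : ℝ)]
    calc Ring.choose ((n + 1 : ℕ) - 1 / 2 : ℝ) (n + 1) ^ 2 * (2 * (n + 1 : ℕ) + 1)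
        = Ring.choose (n - 1 / 2 : ℝ) n ^ 2
            * (((n + 1 / 2 : ℝ) / (n + 1)) ^ 2 * (2 * (n + 1 : ℕ) + 1)) := by rw [ratio]; ring
      _ ≤ Ring.choose (n - 1 / 2 : ℝ) n ^ 2 * (2 * n + 1) := by gcongr
      _ ≤ 1 := ih

lemma abs_choose_sub_half_le {n : ℕ} (hn : 1 ≤ n) :
    |Ring.choose (n - 1 / 2 : ℝ) n| ≤ (n : ℝ) ^ (-1 / 2 : ℝ) := by
  have hn' : (0 : ℝ) < n := by exact_mod_cast hn
  refine abs_le_of_sq_le_sq ?_ (by positivity)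
  rw [← Real.rpow_mul_natCast hn'.le, Nat.cast_ofNat, div_mul_cancel₀ _ two_ne_zero,
    Real.rpow_neg_one, ← one_div, le_div_iff₀ hn']
  refine le_trans ?_ (choose_sub_half_sq_mul_le n)
  gcongr
  linarith

lemma isSymbol_choose_sub_half {X : Type*} (S : Set X) (k : ℕ) :
    IsSymbol S k (-1 / 2) (fun n _ ↦ Ring.choose (n - 1 / 2 : ℝ) n) := by
  have bound : IsSymbol S 0 (-1 / 2) (fun n _ ↦ Ring.choose (n - 1 / 2 : ℝ) n) :=
    isSymbol_zero_iff.2 ⟨1, fun n hn _ _ ↦ by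
      simpa only [one_mul, Real.norm_eq_abs] using abs_choose_sub_half_le hn⟩
  induction k with
  | zero => exact bound
  | succ k ih =>
    have product := ((isSymbol_inv_natCast_add S k (c := 1) (by norm_num)).smul ih).const_smul
      (-1 / 2)
    refine isSymbol_succ_iff.2
      ⟨bound, (product.mono_order (by norm_num)).congr fun n _ _ _ ↦ ?_⟩
    have hn : (n : ℝ) + 1 ≠ 0 := by positivity
    simp only [fwdDiff, Pi.sub_apply, smul_eq_mul]
    refine mul_left_cancel₀ hn ?_
    linear_combination (-1 / 2 * Ring.choose (n - 1 / 2 : ℝ) n) * mul_inv_cancel₀ hn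
      - choose_sub_half_succ n

section FractionalIntegral

variable {E F : Type*} [NormedAddCommGroup E] [NormedSpace ℝ E] [NormedAddCommGroup F]
  [NormedSpace ℝ F] {δ t : ℝ} {f g : ℝ → E}

/-- The Riemann–Liouville integral of order `δ + 1` of `f`, based at `0` and without its
normalizing factor `1 / Γ(δ + 1)`. -/
noncomputable def fracIntegral (δ : ℝ) (f : ℝ → E) (t : ℝ) : E :=
  ∫ θ in (0 : ℝ)..t, (t - θ) ^ δ • f θ

lemma intervalIntegrable_sub_rpow (hδ : -1 < δ) (t : ℝ) :
    IntervalIntegrable (fun θ ↦ (t - θ) ^ δ) volume 0 t := by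
  simpa using (intervalIntegral.intervalIntegrable_rpow' hδ (a := t) (b := 0)).comp_sub_left t

lemma intervalIntegrable_sub_rpow_smul (hδ : -1 < δ) (t : ℝ) (hf : Continuous f) :
    IntervalIntegrable (fun θ ↦ (t - θ) ^ δ • f θ) volume 0 t :=
  (intervalIntegrable_sub_rpow hδ t).smul_continuousOn hf.continuousOn

lemma integral_sub_rpow (hδ : -1 < δ) (t : ℝ) :
    ∫ θ in (0 : ℝ)..t, (t - θ) ^ δ = t ^ (δ + 1) / (δ + 1) := by
  rw [intervalIntegral.integral_comp_sub_left (fun u ↦ u ^ δ), sub_self, sub_zero,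
    integral_rpow (.inl hδ), Real.zero_rpow (by linarith), sub_zero]

lemma fracIntegral_add (hδ : -1 < δ) (hf : Continuous f) (hg : Continuous g) (t : ℝ) :
    fracIntegral δ (f + g) t = fracIntegral δ f t + fracIntegral δ g t := by
  simp only [fracIntegral, Pi.add_apply, smul_add]
  exact intervalIntegral.integral_add (intervalIntegrable_sub_rpow_smul hδ t hf)
    (intervalIntegrable_sub_rpow_smul hδ t hg)

lemma fracIntegral_const_smul (δ c : ℝ) (f : ℝ → E) (t : ℝ) :
    fracIntegral δ (c • f) t = c • fracIntegral δ f t := by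
  simp only [fracIntegral, Pi.smul_apply, smul_comm _ c]
  exact intervalIntegral.integral_smul c _

lemma fracIntegral_clm_comp [CompleteSpace E] [CompleteSpace F] (hδ : -1 < δ) (L : E →L[ℝ] F)
    (hf : Continuous f) (t : ℝ) :
    fracIntegral δ (fun θ ↦ L (f θ)) t = L (fracIntegral δ f t) := by
  simp only [fracIntegral, ← map_smul]
  exact L.intervalIntegral_comp_comm (intervalIntegrable_sub_rpow_smul hδ t hf)

lemma norm_fracIntegral_le {C : ℝ} (hδ : -1 < δ) (ht : 0 ≤ t) (hf : ∀ θ, ‖f θ‖ ≤ C) :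
    ‖fracIntegral δ f t‖ ≤ C * (t ^ (δ + 1) / (δ + 1)) := by
  rw [← integral_sub_rpow hδ, ← intervalIntegral.integral_const_mul]
  refine intervalIntegral.norm_integral_le_of_norm_le ht (.of_forall fun θ hθ ↦ ?_)
    ((intervalIntegrable_sub_rpow hδ t).const_mul C)
  have kernel_nonneg : 0 ≤ (t - θ) ^ δ := Real.rpow_nonneg (sub_nonneg.2 hθ.2) δ
  rw [norm_smul, Real.norm_of_nonneg kernel_nonneg, mul_comm]
  exact mul_le_mul_of_nonneg_right (hf θ) kernel_nonneg

lemma fracIntegral_deriv [CompleteSpace E] {f' : ℝ → E} (hδ : 0 < δ) (ht : 0 ≤ t)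
    (hf : ∀ θ, HasDerivAt f (f' θ) θ) (hf' : Continuous f') :
    fracIntegral δ f' t = δ • fracIntegral (δ - 1) f t - t ^ δ • f 0 := by
  have f_cont : Continuous f := continuous_iff_continuousAt.2 fun θ ↦ (hf θ).continuousAt
  have product_cont : Continuous fun θ ↦ (t - θ) ^ δ • f θ :=
    ((continuous_const.sub continuous_id).rpow_const fun _ ↦ .inr hδ.le).smul f_cont
  have product_deriv (θ : ℝ) (hθ : θ ∈ Ioo 0 t) : HasDerivAt (fun θ ↦ (t - θ) ^ δ • f θ)
      ((t - θ) ^ δ • f' θ - δ • (t - θ) ^ (δ - 1) • f θ) θ := by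
    have kernel_deriv := ((hasDerivAt_id θ).const_sub t).rpow_const (p := δ)
      (.inl (sub_pos.2 hθ.2).ne')
    refine (kernel_deriv.smul (hf θ)).congr_deriv ?_
    simp [sub_eq_add_neg, mul_smul]
  have integrable := intervalIntegrable_sub_rpow_smul (by linarith : -1 < δ) t hf'
  have integrable' : IntervalIntegrable (fun θ ↦ δ • (t - θ) ^ (δ - 1) • f θ) volume 0 t :=
    (intervalIntegrable_sub_rpow_smul (by linarith) t f_cont).smul δ
  have ftc := intervalIntegral.integral_eq_sub_of_hasDerivAt_of_le ht product_cont.continuousOn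
    product_deriv (integrable.sub integrable')
  rw [intervalIntegral.integral_sub integrable integrable', intervalIntegral.integral_smul,
    sub_self, Real.zero_rpow hδ.ne', zero_smul, sub_zero, zero_sub] at ftc
  exact (sub_eq_iff_eq_add'.1 ftc).trans (sub_eq_add_neg _ _).symm

lemma fracIntegral_zero_deriv [CompleteSpace E] {f' : ℝ → E}
    (hf : ∀ θ, HasDerivAt f (f' θ) θ) (hf' : Continuous f') (t : ℝ) :
    fracIntegral 0 f' t = f t - f 0 := by
  simp only [fracIntegral, Real.rpow_zero, one_smul]
  exact intervalIntegral.integral_eq_sub_of_hasDerivAt (fun θ _ ↦ hf θ)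
    (hf'.intervalIntegrable 0 t)

/-- The character `θ ↦ exp (i m θ)` of frequency `m`. -/
noncomputable def expChar (m θ : ℝ) : ℂ :=
  Complex.exp ((m * θ : ℝ) * Complex.I)

variable {T : ℝ} (m : ℝ)

lemma norm_expChar (θ : ℝ) : ‖expChar m θ‖ = 1 :=
  Complex.norm_exp_ofReal_mul_I _

lemma expChar_zero_right : expChar m 0 = 1 := by
  simp [expChar]

lemma continuous_expChar : Continuous (expChar m) := by
  unfold expChar
  fun_prop

lemma hasDerivAt_expChar (θ : ℝ) :
    HasDerivAt (expChar m) (m * Complex.I * expChar m θ) θ := by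
  have phase := (((hasDerivAt_id θ).const_mul m).ofReal_comp.mul_const Complex.I).cexp
  exact phase.congr_deriv (by simp [expChar, mul_comm])

lemma fracIntegral_deriv_expChar (hδ : -1 < δ) (t : ℝ) :
    fracIntegral δ (fun θ ↦ m * Complex.I * expChar m θ) t
      = m * Complex.I * fracIntegral δ (expChar m) t :=
  fracIntegral_clm_comp hδ (ContinuousLinearMap.mul ℝ ℂ (m * Complex.I)) (continuous_expChar m) t

lemma mul_fracIntegral_expChar (hδ : 0 < δ) (ht : 0 ≤ t) :
    m * Complex.I * fracIntegral δ (expChar m) t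
      = δ • fracIntegral (δ - 1) (expChar m) t - (t ^ δ : ℝ) := by
  rw [← fracIntegral_deriv_expChar m (by linarith),
    fracIntegral_deriv hδ ht (hasDerivAt_expChar m) ((continuous_expChar m).const_mul _),
    expChar_zero_right, Complex.real_smul, Complex.real_smul, mul_one]

lemma mul_fracIntegral_zero_expChar (t : ℝ) :
    m * Complex.I * fracIntegral 0 (expChar m) t = expChar m t - 1 := by
  rw [← fracIntegral_deriv_expChar m (by norm_num),
    fracIntegral_zero_deriv (hasDerivAt_expChar m) ((continuous_expChar m).const_mul _),
    expChar_zero_right]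

variable {m} in
lemma norm_fracIntegral_expChar_le (hδ : 0 ≤ δ) (ht : 0 ≤ t) (hm : 0 < m) :
    ‖fracIntegral δ (expChar m) t‖ ≤ 2 * t ^ δ * m⁻¹ := by
  suffices ‖m * Complex.I * fracIntegral δ (expChar m) t‖ ≤ t ^ δ + t ^ δ by
    rw [norm_mul, norm_mul, Complex.norm_I, Complex.norm_of_nonneg hm.le, mul_one] at this
    rw [← div_eq_mul_inv, le_div_iff₀ hm]
    linarith
  rcases hδ.eq_or_lt with rfl | hδ
  · rw [mul_fracIntegral_zero_expChar, Real.rpow_zero]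
    exact (norm_sub_le _ _).trans_eq (by rw [norm_expChar, norm_one])
  · have kernel := norm_fracIntegral_le (by linarith : -1 < δ - 1) ht
      fun θ ↦ (norm_expChar m θ).le
    rw [sub_add_cancel, one_mul, le_div_iff₀ hδ, mul_comm] at kernel
    rw [mul_fracIntegral_expChar m hδ ht]
    refine (norm_sub_le _ _).trans (add_le_add ?_ ?_)
    · rwa [norm_smul, Real.norm_of_nonneg hδ.le]
    · rw [Complex.norm_of_nonneg (by positivity)]

lemma isSymbol_fracIntegral_expChar {k : ℕ} (hδ : k ≤ δ) :
    IsSymbol (Icc 0 T) k (-1) (fun n t ↦ fracIntegral δ (expChar n) t) := by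
  induction k generalizing δ with
  | zero =>
    refine isSymbol_zero_iff.2 ⟨2 * T ^ δ, fun n hn t ht ↦ ?_⟩
    rw [Nat.cast_zero] at hδ
    rw [Real.rpow_neg_one]
    refine (norm_fracIntegral_expChar_le hδ ht.1 (by exact_mod_cast hn)).trans ?_
    have := Real.rpow_le_rpow ht.1 ht.2 hδ
    gcongr
  | succ k ih =>
    push_cast at hδ
    have hδ₀ : 0 < δ := by linarith [k.cast_nonneg (α := ℝ)]
    have boundary : IsSymbol (Icc 0 T) (k + 1) 0 (fun _ t ↦ ((t ^ δ : ℝ) : ℂ)) := by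
      refine isSymbol_const (C := T ^ δ) (fun t ht ↦ ?_) (k + 1)
      rw [Complex.norm_of_nonneg (Real.rpow_nonneg ht.1 δ)]
      exact Real.rpow_le_rpow ht.1 ht.2 hδ₀.le
    have interior : IsSymbol (Icc 0 T) (k + 1) 0
        (fun n t ↦ δ • fracIntegral (δ - 1) (expChar n) t) := by
      refine .succ_of_order_sub_one ?_
      rw [zero_sub]
      exact (ih (by linarith)).const_smul δ
    have parts := ((isSymbol_inv_natCast_add (Icc 0 T) (k + 1) (c := 0) (by norm_num)).smul
      ((interior.sub boundary).clm_comp (ContinuousLinearMap.mul ℝ ℂ (-Complex.I))))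
    refine (parts.mono_order (by norm_num)).congr fun n hn t ht ↦ ?_
    have hn₀ : (n : ℂ) ≠ 0 := by exact_mod_cast (Nat.one_le_iff_ne_zero.1 hn)
    rw [← mul_fracIntegral_expChar n hδ₀ ht.1, add_zero, Complex.real_smul,
      ContinuousLinearMap.mul_apply']
    push_cast
    linear_combination fracIntegral δ (expChar n) t
      * (inv_mul_cancel₀ hn₀ - (n : ℂ)⁻¹ * n * Complex.I_sq)

lemma mul_fracIntegral_cos (hδ : 0 < δ) (ht : 0 ≤ t) :
    m * fracIntegral δ (fun θ ↦ Real.cos (m * θ)) t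
      = δ * (fracIntegral (δ - 1) (expChar m) t).im := by
  have sin_deriv (θ : ℝ) :
      HasDerivAt (fun θ ↦ Real.sin (m * θ)) ((m • fun θ ↦ Real.cos (m * θ)) θ) θ :=
    ((hasDerivAt_id θ).const_mul m).sin.congr_deriv (by simp [mul_comm])
  have parts := fracIntegral_deriv hδ ht sin_deriv (by fun_prop)
  have im_part := fracIntegral_clm_comp (by linarith : -1 < δ - 1) Complex.imCLM
    (continuous_expChar m) t
  simp only [expChar, Complex.imCLM_apply, Complex.exp_ofReal_mul_I_im] at im_part
  rw [fracIntegral_const_smul, mul_zero, Real.sin_zero, smul_zero, sub_zero, im_part] at parts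
  exact parts

lemma isSymbol_fracIntegral_cos {k : ℕ} (hδ : k + 1 ≤ δ) :
    IsSymbol (Icc 0 T) k (-2) (fun n t ↦ fracIntegral δ (fun θ ↦ Real.cos (n * θ)) t) := by
  have hδ₀ : 0 < δ := by linarith [k.cast_nonneg (α := ℝ)]
  have im_part := ((isSymbol_fracIntegral_expChar (δ := δ - 1) (T := T) (k := k)
    (by linarith)).clm_comp Complex.imCLM).const_smul δ
  refine (((isSymbol_inv_natCast_add (Icc 0 T) k (c := 0) (by norm_num)).smul
    im_part).mono_order (by norm_num)).congr fun n hn t ht ↦ ?_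
  have hn₀ : (n : ℝ) ≠ 0 := by exact_mod_cast (Nat.one_le_iff_ne_zero.1 hn)
  rw [Complex.imCLM_apply, smul_eq_mul, smul_eq_mul, ← mul_fracIntegral_cos n hδ₀ ht.1, add_zero,
    inv_mul_cancel_left₀ hn₀]

end FractionalIntegral

section JacobiIntegral

variable (n α β : ℕ)

/-- The Jacobi polynomial of parameters `α - 1 / 2` and `β - 1 / 2` at `cos θ`, times its
trigonometric weight: the function whose fractional integral is `FJ`. The weight is written with
natural powers instead of the real powers in `FJ`. -/
noncomputable def jacobiFun (θ : ℝ) : ℝ :=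
  jacobiP n (α - 1 / 2) (β - 1 / 2) (Real.cos θ)
    * Real.sin (θ / 2) ^ (2 * α) * Real.cos (θ / 2) ^ (2 * β)

lemma continuous_jacobiFun : Continuous (jacobiFun n α β) := by
  unfold jacobiFun jacobiP
  fun_prop

lemma FJ_natCast (δ t : ℝ) : FJ n α β δ t = fracIntegral δ (jacobiFun n α β) t := by
  have two_mul_cast (j : ℕ) : 2 * (j : ℝ) = (2 * j : ℕ) := by push_cast; rfl
  simp only [FJ, fracIntegral, jacobiFun, two_mul_cast, Real.rpow_natCast, smul_eq_mul, mul_assoc]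

lemma sin_half_sq (θ : ℝ) : Real.sin (θ / 2) ^ 2 = (1 - Real.cos θ) / 2 := by
  rw [Real.sin_sq_eq_half_sub, mul_div_cancel₀ θ two_ne_zero, sub_div]

lemma cos_half_sq (θ : ℝ) : Real.cos (θ / 2) ^ 2 = (1 + Real.cos θ) / 2 := by
  rw [Real.cos_sq, mul_div_cancel₀ θ two_ne_zero, add_div]

lemma jacobiFun_zero_zero :
    jacobiFun n 0 0 = Ring.choose (n - 1 / 2 : ℝ) n • fun θ ↦ Real.cos (n * θ) := by
  ext θ
  have h := jacobiP_neg_half n (Real.cos θ)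
  rw [Polynomial.Chebyshev.T_real_cos] at h
  simpa [jacobiFun, neg_div] using h

lemma neg_one_lt_natCast_sub_half (j : ℕ) : (-1 : ℝ) < j - 1 / 2 := by
  linarith [j.cast_nonneg (α := ℝ)]

lemma jacobiFun_add_one_left :
    jacobiFun n (α + 1) β = ((n + (α + 1 / 2)) / (2 * n + (α + β + 1)) : ℝ) • jacobiFun n α β
      + (-((n + 1) / (2 * n + (α + β + 1))) : ℝ) • jacobiFun (n + 1) α β := by
  ext θ
  have h := jacobiP_add_one_left n (Real.cos θ)
    (neg_one_lt_natCast_sub_half α) (neg_one_lt_natCast_sub_half β)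
  rw [← sin_half_sq, sub_add_eq_add_sub] at h
  have hD : (2 * n + (α + β + 1) : ℝ) ≠ 0 := by positivity
  simp only [jacobiFun, Pi.add_apply, Pi.smul_apply, smul_eq_mul, mul_add_one, pow_add]
  push_cast
  rw [neg_mul, div_mul_eq_mul_div, div_mul_eq_mul_div, ← sub_eq_add_neg, ← sub_div, eq_div_iff hD]
  linear_combination (Real.sin (θ / 2) ^ (2 * α) * Real.cos (θ / 2) ^ (2 * β)) * h

lemma jacobiFun_add_one_right :
    jacobiFun n α (β + 1) = ((n + (β + 1 / 2)) / (2 * n + (α + β + 1)) : ℝ) • jacobiFun n α β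
      + ((n + 1) / (2 * n + (α + β + 1)) : ℝ) • jacobiFun (n + 1) α β := by
  ext θ
  have h := jacobiP_add_one_right n (Real.cos θ)
    (neg_one_lt_natCast_sub_half α) (neg_one_lt_natCast_sub_half β)
  rw [← cos_half_sq, sub_add_eq_add_sub] at h
  have hD : (2 * n + (α + β + 1) : ℝ) ≠ 0 := by positivity
  simp only [jacobiFun, Pi.add_apply, Pi.smul_apply, smul_eq_mul, mul_add_one, pow_add]
  push_cast
  rw [div_mul_eq_mul_div, div_mul_eq_mul_div, ← add_div, eq_div_iff hD]
  linear_combination (Real.sin (θ / 2) ^ (2 * α) * Real.cos (θ / 2) ^ (2 * β)) * h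

variable {δ : ℝ}

lemma fracIntegral_jacobiFun_linear_combination (hδ : -1 < δ) (u v t : ℝ) :
    fracIntegral δ (u • jacobiFun n α β + v • jacobiFun (n + 1) α β) t
      = u • fracIntegral δ (jacobiFun n α β) t
        + v • fracIntegral δ (jacobiFun (n + 1) α β) t := by
  rw [fracIntegral_add hδ ((continuous_jacobiFun n α β).const_smul u)
    ((continuous_jacobiFun (n + 1) α β).const_smul v), fracIntegral_const_smul,
    fracIntegral_const_smul]

variable {α β} {k : ℕ} {T : ℝ}

lemma isSymbol_fracIntegral_jacobiFun_zero (hδ : α + k + 1 ≤ δ) :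
    IsSymbol (Icc 0 T) k (-α - 5 / 2) (fun n t ↦ fracIntegral δ (jacobiFun n α 0) t) := by
  induction α generalizing k with
  | zero =>
    have product := (isSymbol_choose_sub_half (Icc 0 T) k).smul
      (isSymbol_fracIntegral_cos (δ := δ) (by simpa using hδ))
    simpa only [jacobiFun_zero_zero, fracIntegral_const_smul] using
      product.mono_order (by norm_num)
  | succ α ih =>
    push_cast at hδ ⊢
    have step := (ih (k := k + 1) (by push_cast; linarith)).ratio_smul_sub_ratio_smul
      (α + 1 / 2) 1 (c := α + (0 : ℕ) + 1) (by push_cast; linarith [α.cast_nonneg (α := ℝ)])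
    have hδ' : -1 < δ := by linarith [α.cast_nonneg (α := ℝ), k.cast_nonneg (α := ℝ)]
    rw [show -((α : ℝ) + 1) - 5 / 2 = -α - 5 / 2 - 1 by ring]
    simp only [jacobiFun_add_one_left, fracIntegral_jacobiFun_linear_combination _ _ _ hδ']
    simpa only [neg_smul, ← sub_eq_add_neg] using step

lemma isSymbol_fracIntegral_jacobiFun (hδ : α + k + 1 ≤ δ) :
    IsSymbol (Icc 0 T) k (-α - 5 / 2) (fun n t ↦ fracIntegral δ (jacobiFun n α β) t) := by
  have hδ' : -1 < δ := by linarith [α.cast_nonneg (α := ℝ), k.cast_nonneg (α := ℝ)]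
  induction β with
  | zero => exact isSymbol_fracIntegral_jacobiFun_zero hδ
  | succ β ih =>
    simpa only [jacobiFun_add_one_right, fracIntegral_jacobiFun_linear_combination _ _ _ hδ'] using
      ih.ratio_smul_add_ratio_smul (β + 1 / 2) 1 (c := α + β + 1)
        (by linarith [α.cast_nonneg (α := ℝ), β.cast_nonneg (α := ℝ)])

end JacobiIntegral

theorem FJ_norm_bound_general (α β : ℕ) (δ : ℝ) (hδ : (α : ℝ) + 1 ≤ δ) (T : ℝ) :
    ∃ c : ℝ, 0 < c ∧ ∀ n : ℕ, 1 ≤ n → ∀ t ∈ Icc 0 T,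
      |FJ n α β δ t| ≤ c * (n : ℝ) ^ (-(α : ℝ) - 5 / 2) := by
  obtain ⟨C, hC⟩ := isSymbol_zero_iff.1
    (isSymbol_fracIntegral_jacobiFun (β := β) (k := 0) (T := T) (by simpa using hδ))
  refine ⟨max C 1, by positivity, fun n hn t ht ↦ ?_⟩
  rw [FJ_natCast]
  exact (hC n hn t ht).trans (by gcongr; exact le_max_left C 1)

theorem FJ_norm_bound (α β : ℕ) (hαβ : 0 < max α β) (δ : ℝ)
    (hδ : (α : ℝ) + 1 ≤ δ) :
    ∃ c : ℝ, 0 < c ∧ ∀ n : ℕ, 1 ≤ n → ∀ t ∈ Set.Ioc (0:ℝ) π,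
      |FJ n (α : ℝ) (β : ℝ) δ t| ≤ c * (n : ℝ) ^ (-(α : ℝ) - 5/2) := by
  obtain ⟨c, hc, h⟩ := FJ_norm_bound_general α β δ hδ π
  exact ⟨c, hc, fun n hn t ht ↦ h n hn t (Ioc_subset_Icc_self ht)⟩
end

section
/- Let β > -1/2 and γ > -1/2 be real, let α be a real number with α > -1/2 and (γ-1)/2 < α < γ, let δ > 0 be real, and fix t ∈ (0, π]. If F_n^{(γ,β),δ}(t) > 0 for all n ∈ ℕ (n ≥ 0), then F_n^{(α,β),δ}(t) > 0 for all n ∈ ℕ (n ≥ 0). -/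
open MeasureTheory Real Set

/-!
In the variable `y = (1 - cos θ) / 2`, `FJ n α β δ t` is the integral of a bounded kernel `g`
against the shifted Jacobi polynomial `P_n^{(a,b)}` for the measure `μ_{a,b}` of density
`y ^ a * (1 - y) ^ b`, where `a = α - 1 / 2` and `b = β - 1 / 2`. For `a ≤ c`, Parseval's
identity for the system `(P_k^{(c,b)})_k`, applied to `g` and `y ^ (a - c) * P_n^{(a,b)}`, gives

`∫ g P_n^{(a,b)} dμ_{a,b} =
  ∑ₖ (∫ g P_k^{(c,b)} dμ_{c,b}) (∫ P_k^{(c,b)} P_n^{(a,b)} dμ_{a,b}) / ∫ (P_k^{(c,b)})² dμ_{c,b}`.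

Repeated integration by parts shows that the connection integrals
`∫ P_k^{(c,b)} P_n^{(a,b)} dμ_{a,b}` are nonnegative, and positive for `k = n`, so positivity passes
from `c` to `a`. Parseval requires `y ^ (a - c) * P_n^{(a,b)}` to be square integrable for
`μ_{c,b}`, that is `-1 < 2a - c`; a larger gap between `a` and `c` is crossed in several steps.
-/

open Polynomial

section ShiftedJacobi

theorem add_one_mul_genBinom_add_one (u v : ℝ) :
    (v + 1) * genBinom u (v + 1) = (u - v) * genBinom u v := by
  -- Both factors may vanish, since `Real.Gamma` takes the value `0` at its poles.
  rcases eq_or_ne (v + 1) 0 with hv | hv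
  · simp [genBinom, hv]
  rcases eq_or_ne (u - v) 0 with huv | huv
  · simp [genBinom, huv, show u - (v + 1) + 1 = u - v by ring]
  rw [genBinom, genBinom, Gamma_add_one hv, Gamma_add_one huv,
    show u - (v + 1) + 1 = u - v by ring]
  field_simp

theorem genBinom_zero_right {u : ℝ} (hu : -1 < u) : genBinom u 0 = 1 := by
  simp [genBinom, (Gamma_pos_of_pos (neg_lt_iff_pos_add.1 hu)).ne']

/-- The coefficient of `((x - 1) / 2) ^ k * ((x + 1) / 2) ^ (n - k)` in the Jacobi polynomial
`P_n^{(a,b)}(x)`. -/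
noncomputable def jacobiCoeff (n : ℕ) (a b : ℝ) (k : ℕ) : ℝ :=
  genBinom (n + a) (n - k) * genBinom (n + b) k

theorem sub_mul_jacobiCoeff_succ (n : ℕ) (a b : ℝ) (k : ℕ) :
    ((n : ℝ) + 1 - k) * jacobiCoeff (n + 1) a b k =
      (k + a + 1) * jacobiCoeff n (a + 1) (b + 1) k := by
  have h := add_one_mul_genBinom_add_one (n + (a + 1)) (n - k)
  rw [jacobiCoeff, jacobiCoeff]
  push_cast
  rw [show (n : ℝ) + 1 + a = n + (a + 1) by ring, show (n : ℝ) + 1 + b = n + (b + 1) by ring,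
    show (n : ℝ) + 1 - k = n - k + 1 by ring]
  linear_combination genBinom (n + (b + 1)) k * h

theorem succ_mul_jacobiCoeff_succ_succ (n : ℕ) (a b : ℝ) (k : ℕ) :
    ((k : ℝ) + 1) * jacobiCoeff (n + 1) a b (k + 1) =
      (n - k + b + 1) * jacobiCoeff n (a + 1) (b + 1) k := by
  have h := add_one_mul_genBinom_add_one (n + (b + 1)) k
  rw [jacobiCoeff, jacobiCoeff]
  push_cast
  rw [show (n : ℝ) + 1 + a = n + (a + 1) by ring, show (n : ℝ) + 1 + b = n + (b + 1) by ring,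
    show (n : ℝ) + 1 - (k + 1) = n - k by ring]
  linear_combination genBinom (n + (a + 1)) (n - k) * h

theorem sum_jacobiCoeff_succ_smul {M : Type*} [AddCommGroup M] [Module ℝ M] (n : ℕ) (a b : ℝ)
    (u v : ℕ → M) :
    ∑ k ∈ Finset.range (n + 2),
        jacobiCoeff (n + 1) a b k • ((k : ℝ) • u k + ((n : ℝ) + 1 - k) • v k) =
      ∑ k ∈ Finset.range (n + 1), jacobiCoeff n (a + 1) (b + 1) k •
        (((n : ℝ) - k + b + 1) • u (k + 1) + ((k : ℝ) + a + 1) • v k) := by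
  simp only [smul_add, smul_smul, Finset.sum_add_distrib, mul_comm (jacobiCoeff _ _ _ _)]
  rw [Finset.sum_range_succ', Finset.sum_range_succ _ (n + 1)]
  simp only [Nat.cast_zero, zero_mul, zero_smul, add_zero, Nat.cast_add, Nat.cast_one, sub_self,
    succ_mul_jacobiCoeff_succ_succ, sub_mul_jacobiCoeff_succ]

/-- The shifted Jacobi polynomial `P_n^{(a,b)}(1 - 2y)`, as a polynomial in `y`. The variable
`y = (1 - x) / 2` moves the interval of orthogonality to `(0, 1)`. -/
noncomputable def shiftedJacobi (n : ℕ) (a b : ℝ) : ℝ[X] :=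
  ∑ k ∈ Finset.range (n + 1), jacobiCoeff n a b k • ((-X) ^ k * (1 - X) ^ (n - k))

theorem eval_shiftedJacobi (n : ℕ) (a b y : ℝ) :
    (shiftedJacobi n a b).eval y = jacobiP n a b (1 - 2 * y) := by
  rw [shiftedJacobi, eval_finsetSum, jacobiP]
  refine Finset.sum_congr rfl fun k _ => ?_
  simp only [eval_smul, eval_mul, eval_pow, eval_neg, eval_X, eval_sub, eval_one, smul_eq_mul,
    jacobiCoeff]
  rw [show (1 - 2 * y - 1) / 2 = -y by ring, show (1 - 2 * y + 1) / 2 = 1 - y by ring]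
  ring

theorem shiftedJacobi_zero {a b : ℝ} (ha : -1 < a) (hb : -1 < b) : shiftedJacobi 0 a b = 1 := by
  simp [shiftedJacobi, jacobiCoeff, genBinom_zero_right ha, genBinom_zero_right hb]

theorem derivative_neg_X_pow_mul_one_sub_X_pow (k m : ℕ) :
    derivative ((-X : ℝ[X]) ^ k * (1 - X) ^ m) =
      (k : ℝ) • -((-X) ^ (k - 1) * (1 - X) ^ m) + (m : ℝ) • -((-X) ^ k * (1 - X) ^ (m - 1)) := by
  simp only [derivative_mul, derivative_pow, derivative_neg, derivative_X, derivative_sub,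
    derivative_one, smul_eq_C_mul, map_natCast]
  ring

theorem derivative_shiftedJacobi_succ (n : ℕ) (a b : ℝ) :
    derivative (shiftedJacobi (n + 1) a b) =
      -((n : ℝ) + a + b + 2) • shiftedJacobi n (a + 1) (b + 1) := by
  calc derivative (shiftedJacobi (n + 1) a b)
      = ∑ k ∈ Finset.range (n + 2), jacobiCoeff (n + 1) a b k •
          ((k : ℝ) • -((-X) ^ (k - 1) * (1 - X) ^ (n + 1 - k)) +
            ((n : ℝ) + 1 - k) • -((-X) ^ k * (1 - X) ^ (n - k))) := by
        rw [shiftedJacobi, derivative_sum]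
        refine Finset.sum_congr rfl fun k hk => ?_
        rw [derivative_smul, derivative_neg_X_pow_mul_one_sub_X_pow,
          Nat.cast_sub (Finset.mem_range_succ_iff.1 hk), Nat.cast_add_one,
          show n + 1 - k - 1 = n - k by lia]
    _ = -((n : ℝ) + a + b + 2) • shiftedJacobi n (a + 1) (b + 1) := by
        rw [sum_jacobiCoeff_succ_smul, shiftedJacobi, Finset.smul_sum]
        refine Finset.sum_congr rfl fun k _ => ?_
        rw [Nat.add_sub_cancel, Nat.add_sub_add_right]
        module

/-- The operator `D` with `(w_{a+1,b+1} p)' = w_{a,b} (D p)` for the weights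
`w_{a,b}(y) = y ^ a * (1 - y) ^ b`. It raises the degree of the Jacobi polynomials and lowers their
exponents. -/
noncomputable def jacobiRaising (a b : ℝ) : ℝ[X] →ₗ[ℝ] ℝ[X] :=
  LinearMap.mulLeft ℝ (C (a + 1) * (1 - X) - C (b + 1) * X) +
    LinearMap.mulLeft ℝ (X * (1 - X)) ∘ₗ derivative

theorem jacobiRaising_apply (a b : ℝ) (p : ℝ[X]) :
    jacobiRaising a b p =
      (C (a + 1) * (1 - X) - C (b + 1) * X) * p + X * (1 - X) * derivative p :=
  rfl

theorem jacobiRaising_mul (a b : ℝ) (p q : ℝ[X]) :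
    jacobiRaising a b (p * q) = p * jacobiRaising a b q + X * (1 - X) * (derivative p * q) := by
  simp only [jacobiRaising_apply, derivative_mul]
  ring

theorem jacobiRaising_sub_jacobiRaising (a b c : ℝ) (p : ℝ[X]) :
    jacobiRaising c b p - jacobiRaising a b p = (c - a) • ((1 - X) * p) := by
  simp only [jacobiRaising_apply, smul_eq_C_mul, C_add, C_sub]
  ring

theorem X_mul_one_sub_X_mul_derivative_neg_X_pow_mul_one_sub_X_pow (k m : ℕ) :
    X * (1 - X) * derivative ((-X : ℝ[X]) ^ k * (1 - X) ^ m) =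
      (C (k : ℝ) * (1 - X) - C (m : ℝ) * X) * ((-X) ^ k * (1 - X) ^ m) := by
  rw [derivative_neg_X_pow_mul_one_sub_X_pow]
  rcases k with _ | k <;> rcases m with _ | m <;>
    simp only [smul_eq_C_mul, Nat.cast_zero, C_0, Nat.add_sub_cancel] <;> ring

theorem jacobiRaising_shiftedJacobi (n : ℕ) (a b : ℝ) :
    jacobiRaising a b (shiftedJacobi n (a + 1) (b + 1)) =
      ((n : ℝ) + 1) • shiftedJacobi (n + 1) a b := by
  let B : ℕ → ℝ[X] := fun k => (-X) ^ k * (1 - X) ^ (n + 1 - k)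
  calc jacobiRaising a b (shiftedJacobi n (a + 1) (b + 1))
      = ∑ k ∈ Finset.range (n + 1), jacobiCoeff n (a + 1) (b + 1) k •
          (((n : ℝ) - k + b + 1) • B (k + 1) + ((k : ℝ) + a + 1) • B k) := by
        rw [shiftedJacobi, map_sum]
        refine Finset.sum_congr rfl fun k hk => ?_
        have hk : k ≤ n := Finset.mem_range_succ_iff.1 hk
        rw [map_smul, jacobiRaising_apply,
          X_mul_one_sub_X_mul_derivative_neg_X_pow_mul_one_sub_X_pow, Nat.cast_sub hk]
        simp only [B, Nat.add_sub_add_right, Nat.sub_add_comm hk, smul_eq_C_mul, C_add, C_sub, C_1]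
        ring
    _ = ∑ k ∈ Finset.range (n + 2), jacobiCoeff (n + 1) a b k •
          ((k : ℝ) • B k + ((n : ℝ) + 1 - k) • B k) := (sum_jacobiCoeff_succ_smul n a b B B).symm
    _ = ((n : ℝ) + 1) • shiftedJacobi (n + 1) a b := by
        rw [shiftedJacobi, Finset.smul_sum]
        refine Finset.sum_congr rfl fun k _ => ?_
        module

theorem degree_shiftedJacobi (n : ℕ) {a b : ℝ} (ha : -1 < a) (hb : -1 < b) :
    (shiftedJacobi n a b).degree = n := by
  induction n generalizing a b with
  | zero => rw [shiftedJacobi_zero ha hb, degree_one, Nat.cast_zero]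
  | succ n ih =>
    have hc : -((n : ℝ) + a + b + 2) ≠ 0 := by linarith [n.cast_nonneg (α := ℝ)]
    have hdeg : (derivative (shiftedJacobi (n + 1) a b)).degree = n := by
      rw [derivative_shiftedJacobi_succ, smul_eq_C_mul, degree_C_mul hc,
        ih (by linarith) (by linarith)]
    have hpos : (shiftedJacobi (n + 1) a b).natDegree ≠ 0 := fun h => by
      simp [derivative_of_natDegree_zero h] at hdeg
    have hnat := natDegree_eq_of_degree_eq_some hdeg
    rw [natDegree_derivative] at hnat
    rw [degree_eq_natDegree (ne_zero_of_natDegree_gt (Nat.pos_of_ne_zero hpos))]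
    exact_mod_cast (by lia : (shiftedJacobi (n + 1) a b).natDegree = n + 1)

end ShiftedJacobi

section JacobiMeasure

/-- The measure `y ^ a * (1 - y) ^ b dy` on `(0, 1)`, with respect to which the shifted Jacobi
polynomials are orthogonal. Unlike `ProbabilityTheory.betaMeasure` it is not normalised. -/
noncomputable def jacobiMeasure (a b : ℝ) : Measure ℝ :=
  (volume.restrict (Ioo 0 1)).withDensity fun y => ENNReal.ofReal (y ^ a * (1 - y) ^ b)

variable {a b : ℝ}

theorem jacobiWeight_nonneg (a b : ℝ) {y : ℝ} (hy : y ∈ Ioo (0 : ℝ) 1) :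
    0 ≤ y ^ a * (1 - y) ^ b :=
  mul_nonneg (rpow_nonneg hy.1.le a) (rpow_nonneg (sub_nonneg.2 hy.2.le) b)

theorem ae_mem_Ioo_jacobiMeasure (a b : ℝ) : ∀ᵐ y ∂jacobiMeasure a b, y ∈ Ioo (0 : ℝ) 1 :=
  (withDensity_absolutelyContinuous _ _).ae_le (ae_restrict_mem measurableSet_Ioo)

theorem ae_mem_Icc_jacobiMeasure (a b : ℝ) : ∀ᵐ y ∂jacobiMeasure a b, y ∈ Icc (0 : ℝ) 1 :=
  (ae_mem_Ioo_jacobiMeasure a b).mono fun _ hy => Ioo_subset_Icc_self hy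

theorem integral_jacobiMeasure (a b : ℝ) (h : ℝ → ℝ) :
    ∫ y, h y ∂jacobiMeasure a b = ∫ y in Ioo (0 : ℝ) 1, h y * (y ^ a * (1 - y) ^ b) := by
  rw [jacobiMeasure, integral_withDensity_eq_integral_toReal_smul (by fun_prop) (by simp)]
  refine setIntegral_congr_fun measurableSet_Ioo fun y hy => ?_
  simp only [ENNReal.toReal_ofReal (jacobiWeight_nonneg a b hy), smul_eq_mul, mul_comm]

theorem integrable_jacobiMeasure_iff (a b : ℝ) (h : ℝ → ℝ) :
    Integrable h (jacobiMeasure a b) ↔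
      IntegrableOn (fun y => h y * (y ^ a * (1 - y) ^ b)) (Ioo 0 1) := by
  rw [jacobiMeasure, integrable_withDensity_iff (by fun_prop) (by simp)]
  refine integrableOn_congr_fun (fun y hy => ?_) measurableSet_Ioo
  simp only [ENNReal.toReal_ofReal (jacobiWeight_nonneg a b hy)]

theorem jacobiWeight_add (a b r s : ℝ) {y : ℝ} (hy : y ∈ Ioo (0 : ℝ) 1) :
    y ^ (a + r) * (1 - y) ^ (b + s) = y ^ r * (1 - y) ^ s * (y ^ a * (1 - y) ^ b) := by
  rw [rpow_add hy.1, rpow_add (sub_pos.2 hy.2)]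
  ring

theorem integral_jacobiMeasure_add (a b r s : ℝ) (h : ℝ → ℝ) :
    ∫ y, h y ∂jacobiMeasure (a + r) (b + s) =
      ∫ y, y ^ r * (1 - y) ^ s * h y ∂jacobiMeasure a b := by
  rw [integral_jacobiMeasure, integral_jacobiMeasure]
  refine setIntegral_congr_fun measurableSet_Ioo fun y hy => ?_
  simp only [jacobiWeight_add a b r s hy]
  ring

theorem integrable_jacobiMeasure_add_iff (a b r s : ℝ) (h : ℝ → ℝ) :
    Integrable h (jacobiMeasure (a + r) (b + s)) ↔
      Integrable (fun y => y ^ r * (1 - y) ^ s * h y) (jacobiMeasure a b) := by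
  rw [integrable_jacobiMeasure_iff, integrable_jacobiMeasure_iff]
  refine integrableOn_congr_fun (fun y hy => ?_) measurableSet_Ioo
  simp only [jacobiWeight_add a b r s hy]
  ring

theorem jacobiMeasure_antitone_left {c : ℝ} (hac : a ≤ c) (b : ℝ) :
    jacobiMeasure c b ≤ jacobiMeasure a b := by
  refine withDensity_mono ((ae_restrict_mem measurableSet_Ioo).mono fun y hy => ?_)
  exact ENNReal.ofReal_le_ofReal (mul_le_mul_of_nonneg_right
    (rpow_le_rpow_of_exponent_ge hy.1 hy.2.le hac) (rpow_nonneg (sub_nonneg.2 hy.2.le) b))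

theorem jacobiMeasure_eq_smul_betaMeasure (ha : -1 < a) (hb : -1 < b) :
    jacobiMeasure a b = ENNReal.ofReal (ProbabilityTheory.beta (a + 1) (b + 1)) •
      ProbabilityTheory.betaMeasure (a + 1) (b + 1) := by
  have hB := ProbabilityTheory.beta_pos (neg_lt_iff_pos_add.1 ha) (neg_lt_iff_pos_add.1 hb)
  rw [jacobiMeasure, ProbabilityTheory.betaMeasure, ← withDensity_indicator measurableSet_Ioo,
    ← withDensity_smul' _ _ ENNReal.ofReal_ne_top]
  congr 1
  ext y
  by_cases hy : y ∈ Ioo (0 : ℝ) 1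
  · rw [indicator_of_mem hy, Pi.smul_apply, ProbabilityTheory.betaPDF_of_pos_lt_one hy.1 hy.2,
      smul_eq_mul, ← ENNReal.ofReal_mul hB.le]
    congr 1
    simp only [add_sub_cancel_right]
    field_simp
  · have hzero : ProbabilityTheory.betaPDF (a + 1) (b + 1) y = 0 := by
      rw [ProbabilityTheory.betaPDF_eq, if_neg (c := 0 < y ∧ y < 1) hy, ENNReal.ofReal_zero]
    rw [indicator_of_notMem hy, Pi.smul_apply, hzero, smul_zero]

theorem isFiniteMeasure_jacobiMeasure (ha : -1 < a) (hb : -1 < b) :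
    IsFiniteMeasure (jacobiMeasure a b) := by
  have := ProbabilityTheory.isProbabilityMeasureBeta
    (neg_lt_iff_pos_add.1 ha) (neg_lt_iff_pos_add.1 hb)
  rw [jacobiMeasure_eq_smul_betaMeasure ha hb]
  exact Measure.smul_finite _ ENNReal.ofReal_ne_top

theorem jacobiMeasure_real_univ_pos (ha : -1 < a) (hb : -1 < b) :
    0 < (jacobiMeasure a b).real univ := by
  have := ProbabilityTheory.isProbabilityMeasureBeta
    (neg_lt_iff_pos_add.1 ha) (neg_lt_iff_pos_add.1 hb)
  have hB := ProbabilityTheory.beta_pos (neg_lt_iff_pos_add.1 ha) (neg_lt_iff_pos_add.1 hb)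
  simp [jacobiMeasure_eq_smul_betaMeasure ha hb, hB.le, hB]

end JacobiMeasure

section OrthogonalExpansion

theorem hasSum_inner_mul_inner_div_norm_sq {ι 𝕜 E : Type*} [RCLike 𝕜] [NormedAddCommGroup E]
    [InnerProductSpace 𝕜 E] [CompleteSpace E] {v : ι → E}
    (horth : Pairwise fun i j => inner 𝕜 (v i) (v j) = 0) (hne : ∀ i, v i ≠ 0)
    (hdense : (Submodule.span 𝕜 (range v)).topologicalClosure = ⊤) (f g : E) :
    HasSum (fun i => inner 𝕜 f (v i) * inner 𝕜 (v i) g / (‖v i‖ : 𝕜) ^ 2) (inner 𝕜 f g) := by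
  have hnorm : ∀ i, (‖v i‖ : 𝕜) ≠ 0 := fun i =>
    RCLike.ofReal_ne_zero.2 (norm_ne_zero_iff.2 (hne i))
  let e : ι → E := fun i => (‖v i‖⁻¹ : 𝕜) • v i
  have he : Orthonormal 𝕜 e :=
    ⟨fun i => norm_smul_inv_norm (hne i), fun i j hij => by
      simp only [e, inner_smul_left, inner_smul_right, horth hij, mul_zero]⟩
  have hspan : Submodule.span 𝕜 (range v) ≤ Submodule.span 𝕜 (range e) := by
    rw [Submodule.span_le]
    rintro _ ⟨i, rfl⟩
    have hvi : v i = (‖v i‖ : 𝕜) • e i := (smul_inv_smul₀ (hnorm i) (v i)).symm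
    rw [hvi]
    exact Submodule.smul_mem _ _ (Submodule.subset_span ⟨i, rfl⟩)
  have hsum := (HilbertBasis.mk he (hdense.ge.trans
    (Submodule.topologicalClosure_mono hspan))).hasSum_inner_mul_inner f g
  refine hsum.congr_fun fun i => ?_
  simp only [HilbertBasis.coe_mk, e, inner_smul_left, inner_smul_right, map_inv₀,
    RCLike.conj_ofReal]
  field_simp

theorem inner_toLp_toLp {α : Type*} [MeasurableSpace α] {μ : Measure α} {f g : α → ℝ}
    (hf : MemLp f 2 μ) (hg : MemLp g 2 μ) :
    inner ℝ (hf.toLp f) (hg.toLp g) = ∫ x, f x * g x ∂μ := by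
  rw [L2.inner_def]
  refine integral_congr_ae ?_
  filter_upwards [hf.coeFn_toLp, hg.coeFn_toLp] with x hfx hgx
  rw [hfx, hgx, real_inner_eq_re_inner, RCLike.inner_apply', RCLike.re_to_real, conj_trivial]

variable {μ : Measure ℝ} [IsFiniteMeasure μ] {l r : ℝ}

theorem memLp_eval (hμ : ∀ᵐ y ∂μ, y ∈ Icc l r) (q : ENNReal) (p : ℝ[X]) :
    MemLp (fun y => p.eval y) q μ := by
  obtain ⟨B, hB⟩ := isCompact_Icc.exists_bound_of_continuousOn p.continuous.continuousOn
  exact MemLp.of_bound p.continuous.aestronglyMeasurable B (hμ.mono hB)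

theorem exists_polynomial_eLpNorm_sub_le (hμ : ∀ᵐ y ∂μ, y ∈ Icc l r) {q : ENNReal} (hq : 1 ≤ q)
    (hq_top : q ≠ ⊤) {f : ℝ → ℝ} (hf : MemLp f q μ) {ε : ENNReal} (hε : ε ≠ 0) :
    ∃ p : ℝ[X], eLpNorm (f - fun y => p.eval y) q μ ≤ ε := by
  have hε2 : ε / 2 ≠ 0 := (ENNReal.half_pos hε).ne'
  obtain ⟨g, hfg, hg⟩ := hf.exists_boundedContinuous_eLpNorm_sub_le hq_top hε2
  obtain ⟨η, hη, hημ⟩ := ENNReal.exists_nnreal_pos_mul_lt (a := μ univ ^ q.toReal⁻¹)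
    (ENNReal.rpow_ne_top_of_nonneg (by positivity) (measure_ne_top μ univ)) hε2
  obtain ⟨p, hp⟩ := exists_polynomial_near_of_continuousOn l r g g.continuous.continuousOn η hη
  have hgp : eLpNorm (⇑g - fun y => p.eval y) q μ ≤ ε / 2 := by
    refine (eLpNorm_le_of_ae_bound (C := η) (hμ.mono fun y hy => ?_)).trans ?_
    · rw [Pi.sub_apply, norm_sub_rev]
      exact (hp y hy).le
    · rw [ENNReal.ofReal_coe_nnreal, mul_comm]
      exact hημ.le
  refine ⟨p, ?_⟩
  calc eLpNorm (f - fun y => p.eval y) q μ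
      = eLpNorm ((f - ⇑g) + (⇑g - fun y => p.eval y)) q μ := by rw [sub_add_sub_cancel]
    _ ≤ eLpNorm (f - ⇑g) q μ + eLpNorm (⇑g - fun y => p.eval y) q μ :=
        eLpNorm_add_le (hf.sub hg).1 (hg.sub (memLp_eval hμ q p)).1 hq
    _ ≤ ε / 2 + ε / 2 := add_le_add hfg hgp
    _ = ε := ENNReal.add_halves ε

/-- The linear map sending a polynomial to its class in `Lp`, for a finite measure carried by a
bounded interval. -/
noncomputable def polynomialToLp (hμ : ∀ᵐ y ∂μ, y ∈ Icc l r) (q : ENNReal) :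
    ℝ[X] →ₗ[ℝ] Lp ℝ q μ where
  toFun p := (memLp_eval hμ q p).toLp _
  map_add' p₁ p₂ := by
    simp only [eval_add]
    exact MemLp.toLp_add (memLp_eval hμ q p₁) (memLp_eval hμ q p₂)
  map_smul' s p := by
    simp only [eval_smul]
    exact MemLp.toLp_const_smul s (memLp_eval hμ q p)

theorem denseRange_polynomialToLp (hμ : ∀ᵐ y ∂μ, y ∈ Icc l r) {q : ENNReal} [Fact (1 ≤ q)]
    (hq_top : q ≠ ⊤) : DenseRange (polynomialToLp hμ q) := by
  intro f
  rw [EMetric.mem_closure_iff]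
  intro ε hε
  obtain ⟨ε', hε', hε'ε⟩ := exists_between hε
  obtain ⟨p, hp⟩ := exists_polynomial_eLpNorm_sub_le hμ Fact.out hq_top (Lp.memLp f) hε'.ne'
  refine ⟨polynomialToLp hμ q p, mem_range_self p, lt_of_le_of_lt ?_ hε'ε⟩
  rw [← Lp.toLp_coeFn f (Lp.memLp f)]
  exact (Lp.edist_toLp_toLp _ _ _ (memLp_eval hμ q p)).trans_le hp

theorem topologicalClosure_span_range_polynomialToLp (hμ : ∀ᵐ y ∂μ, y ∈ Icc l r) {q : ENNReal}
    [Fact (1 ≤ q)] (hq_top : q ≠ ⊤) (S : Polynomial.Sequence ℝ) :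
    (Submodule.span ℝ (range fun n => polynomialToLp hμ q (S n))).topologicalClosure = ⊤ := by
  have hspan : Submodule.span ℝ (range S) = ⊤ :=
    S.span fun i => (leadingCoeff_ne_zero.2 (S.ne_zero i)).isUnit
  rw [range_comp' (polynomialToLp hμ q) S, ← Submodule.map_span, hspan, Submodule.map_top,
    ← Submodule.dense_iff_topologicalClosure_eq_top, LinearMap.coe_range]
  exact denseRange_polynomialToLp hμ hq_top

theorem hasSum_integral_mul_integral_div_integral_sq (hμ : ∀ᵐ y ∂μ, y ∈ Icc l r)
    (S : Polynomial.Sequence ℝ)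
    (horth : Pairwise fun m n => ∫ y, (S m).eval y * (S n).eval y ∂μ = 0)
    (hne : ∀ n, ∫ y, (S n).eval y * (S n).eval y ∂μ ≠ 0) {f g : ℝ → ℝ} (hf : MemLp f 2 μ)
    (hg : MemLp g 2 μ) :
    HasSum (fun n => (∫ y, f y * (S n).eval y ∂μ) * (∫ y, (S n).eval y * g y ∂μ) /
      ∫ y, (S n).eval y * (S n).eval y ∂μ) (∫ y, f y * g y ∂μ) := by
  let v : ℕ → Lp ℝ 2 μ := fun n => polynomialToLp hμ 2 (S n)
  have hv : ∀ m n, inner ℝ (v m) (v n) = ∫ y, (S m).eval y * (S n).eval y ∂μ := fun m n =>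
    inner_toLp_toLp (memLp_eval hμ 2 (S m)) (memLp_eval hμ 2 (S n))
  have hsum := hasSum_inner_mul_inner_div_norm_sq (𝕜 := ℝ) (v := v)
    (fun m n hmn => (hv m n).trans (horth hmn))
    (fun n h0 => hne n (by rw [← hv, h0, inner_zero_left]))
    (topologicalClosure_span_range_polynomialToLp hμ ENNReal.ofNat_ne_top S)
    (hf.toLp f) (hg.toLp g)
  rw [inner_toLp_toLp] at hsum
  refine hsum.congr_fun fun n => ?_
  rw [RCLike.ofReal_real_eq_id, id, ← real_inner_self_eq_norm_sq, hv]
  congr 2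
  · exact (inner_toLp_toLp hf (memLp_eval hμ 2 (S n))).symm
  · exact (inner_toLp_toLp (memLp_eval hμ 2 (S n)) hg).symm

end OrthogonalExpansion

section ConnectionIntegrals

variable {a b c : ℝ}

theorem integrable_eval_jacobiMeasure (ha : -1 < a) (hb : -1 < b) (p : ℝ[X]) :
    Integrable (fun y => p.eval y) (jacobiMeasure a b) := by
  have := isFiniteMeasure_jacobiMeasure ha hb
  exact memLp_one_iff_integrable.1 (memLp_eval (ae_mem_Icc_jacobiMeasure a b) 1 p)

theorem hasDerivAt_eval_mul_jacobiWeight (a b : ℝ) (p : ℝ[X]) {y : ℝ} (hy : y ∈ Ioo (0 : ℝ) 1) :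
    HasDerivAt (fun y => p.eval y * (y ^ (a + 1) * (1 - y) ^ (b + 1)))
      ((jacobiRaising a b p).eval y * (y ^ a * (1 - y) ^ b)) y := by
  have hy1 : 0 < 1 - y := sub_pos.2 hy.2
  have hleft := Real.hasDerivAt_rpow_const (p := a + 1) (Or.inl hy.1.ne')
  have hright := ((hasDerivAt_id y).const_sub 1).rpow_const (p := b + 1) (Or.inl hy1.ne')
  refine ((p.hasDerivAt y).mul (hleft.mul hright)).congr_deriv ?_
  simp only [jacobiRaising_apply, eval_add, eval_sub, eval_mul, eval_C, eval_X, eval_one, id,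
    add_sub_cancel_right, Pi.mul_apply, rpow_add_one hy1.ne', rpow_add_one hy.1.ne']
  ring

theorem integral_jacobiRaising (ha : -1 < a) (hb : -1 < b) (p : ℝ[X]) :
    ∫ y, (jacobiRaising a b p).eval y ∂jacobiMeasure a b = 0 := by
  have ha' : 0 < a + 1 := neg_lt_iff_pos_add.1 ha
  have hb' : 0 < b + 1 := neg_lt_iff_pos_add.1 hb
  have hcont : Continuous fun y : ℝ => p.eval y * (y ^ (a + 1) * (1 - y) ^ (b + 1)) :=
    p.continuous.mul ((continuous_id.rpow_const fun _ => Or.inr ha'.le).mul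
      ((continuous_const.sub continuous_id).rpow_const fun _ => Or.inr hb'.le))
  rw [integral_jacobiMeasure, ← integral_Ioc_eq_integral_Ioo,
    ← intervalIntegral.integral_of_le zero_le_one,
    intervalIntegral.integral_eq_sub_of_hasDerivAt_of_le zero_le_one hcont.continuousOn
      fun y hy => hasDerivAt_eval_mul_jacobiWeight a b p hy]
  · simp [zero_rpow ha'.ne', zero_rpow hb'.ne']
  · rw [intervalIntegrable_iff_integrableOn_Ioo_of_le zero_le_one]
    exact (integrable_jacobiMeasure_iff a b _).1 (integrable_eval_jacobiMeasure ha hb _)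

theorem integral_mul_jacobiRaising (ha : -1 < a) (hb : -1 < b) (p q : ℝ[X]) :
    ∫ y, (p * jacobiRaising a b q).eval y ∂jacobiMeasure a b =
      -∫ y, (derivative p * q).eval y ∂jacobiMeasure (a + 1) (b + 1) := by
  have h := integral_jacobiRaising ha hb (p * q)
  simp only [jacobiRaising_mul, eval_add] at h
  rw [integral_add (integrable_eval_jacobiMeasure ha hb _)
    (integrable_eval_jacobiMeasure ha hb _)] at h
  simp only [integral_jacobiMeasure_add, rpow_one]
  rw [eq_neg_iff_add_eq_zero, ← h]
  simp only [eval_mul, eval_sub, eval_X, eval_one]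

theorem succ_mul_integral_mul_shiftedJacobi_succ (n : ℕ) (ha : -1 < a) (hb : -1 < b) (p : ℝ[X]) :
    ((n : ℝ) + 1) * ∫ y, (p * shiftedJacobi (n + 1) a b).eval y ∂jacobiMeasure a b =
      -∫ y, (derivative p * shiftedJacobi n (a + 1) (b + 1)).eval y
        ∂jacobiMeasure (a + 1) (b + 1) := by
  rw [← integral_mul_jacobiRaising ha hb, jacobiRaising_shiftedJacobi, ← integral_const_mul]
  simp only [mul_smul_comm, eval_smul, smul_eq_mul]

theorem integral_mul_shiftedJacobi_eq_zero (ha : -1 < a) (hb : -1 < b) {p : ℝ[X]} {n : ℕ}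
    (hp : p.degree < n) :
    ∫ y, (p * shiftedJacobi n a b).eval y ∂jacobiMeasure a b = 0 := by
  induction n generalizing a b p with
  | zero =>
    rw [degree_eq_bot.1 (Nat.WithBot.lt_zero_iff.1 hp)]
    simp only [zero_mul, eval_zero, integral_zero]
  | succ n ih =>
    have hp' : (derivative p).degree < n := by
      rw [degree_lt_iff_coeff_zero] at hp ⊢
      intro m hm
      rw [coeff_derivative, hp (m + 1) (by lia), zero_mul]
    have h := succ_mul_integral_mul_shiftedJacobi_succ n ha hb p
    rw [ih (by linarith) (by linarith) hp', neg_zero] at h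
    exact (mul_eq_zero.1 h).resolve_left n.cast_add_one_ne_zero

theorem succ_mul_integral_shiftedJacobi_succ (k : ℕ) (ha : -1 < a) (hb : -1 < b) :
    ((k : ℝ) + 1) * ∫ y, (shiftedJacobi (k + 1) c b).eval y ∂jacobiMeasure a b =
      (c - a) * ∫ y, (shiftedJacobi k (c + 1) (b + 1)).eval y ∂jacobiMeasure a (b + 1) := by
  let p := shiftedJacobi k (c + 1) (b + 1)
  have hD : jacobiRaising c b p = jacobiRaising a b p + (c - a) • ((1 - X) * p) :=
    eq_add_of_sub_eq' (jacobiRaising_sub_jacobiRaising a b c p)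
  have hshift := integral_jacobiMeasure_add a b 0 1 fun y => p.eval y
  simp only [add_zero, rpow_zero, rpow_one, one_mul] at hshift
  calc ((k : ℝ) + 1) * ∫ y, (shiftedJacobi (k + 1) c b).eval y ∂jacobiMeasure a b
      = ∫ y, (jacobiRaising c b p).eval y ∂jacobiMeasure a b := by
        simp only [p, jacobiRaising_shiftedJacobi, eval_smul, smul_eq_mul, integral_const_mul]
    _ = ∫ y, ((c - a) • ((1 - X) * p)).eval y ∂jacobiMeasure a b := by
        simp only [hD, eval_add]
        rw [integral_add (integrable_eval_jacobiMeasure ha hb _)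
          (integrable_eval_jacobiMeasure ha hb _), integral_jacobiRaising ha hb, zero_add]
    _ = (c - a) * ∫ y, p.eval y ∂jacobiMeasure a (b + 1) := by
        rw [hshift, ← integral_const_mul]
        simp only [eval_smul, eval_mul, eval_sub, eval_one, eval_X, smul_eq_mul]

theorem integral_shiftedJacobi_nonneg (k : ℕ) (ha : -1 < a) (hb : -1 < b) (hac : a ≤ c) :
    0 ≤ ∫ y, (shiftedJacobi k c b).eval y ∂jacobiMeasure a b := by
  induction k generalizing b c with
  | zero =>
    simp only [shiftedJacobi_zero (ha.trans_le hac) hb, eval_one, integral_const, smul_eq_mul,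
      mul_one, measureReal_nonneg]
  | succ k ih =>
    refine (mul_nonneg_iff_of_pos_left k.cast_add_one_pos).1 ?_
    rw [succ_mul_integral_shiftedJacobi_succ k ha hb]
    exact mul_nonneg (sub_nonneg.2 hac) (ih (by linarith) (by linarith))

theorem succ_mul_integral_shiftedJacobi_succ_mul_shiftedJacobi_succ (k n : ℕ) (ha : -1 < a)
    (hb : -1 < b) :
    ((n : ℝ) + 1) *
        ∫ y, (shiftedJacobi (k + 1) c b * shiftedJacobi (n + 1) a b).eval y ∂jacobiMeasure a b =
      ((k : ℝ) + c + b + 2) *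
        ∫ y, (shiftedJacobi k (c + 1) (b + 1) * shiftedJacobi n (a + 1) (b + 1)).eval y
          ∂jacobiMeasure (a + 1) (b + 1) := by
  rw [succ_mul_integral_mul_shiftedJacobi_succ n ha hb, derivative_shiftedJacobi_succ]
  simp only [smul_mul_assoc, eval_smul, smul_eq_mul, integral_const_mul]
  ring

theorem integral_shiftedJacobi_mul_shiftedJacobi_nonneg (k n : ℕ) (ha : -1 < a) (hb : -1 < b)
    (hac : a ≤ c) :
    0 ≤ ∫ y, (shiftedJacobi k c b * shiftedJacobi n a b).eval y ∂jacobiMeasure a b := by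
  induction n generalizing k a b c with
  | zero =>
    rw [shiftedJacobi_zero ha hb, mul_one]
    exact integral_shiftedJacobi_nonneg k ha hb hac
  | succ n ih =>
    rcases k with _ | k
    · refine (integral_mul_shiftedJacobi_eq_zero ha hb ?_).ge
      rw [degree_shiftedJacobi 0 (ha.trans_le hac) hb]
      exact_mod_cast n.succ_pos
    · refine (mul_nonneg_iff_of_pos_left n.cast_add_one_pos).1 ?_
      rw [succ_mul_integral_shiftedJacobi_succ_mul_shiftedJacobi_succ k n ha hb]
      exact mul_nonneg (by linarith [k.cast_nonneg (α := ℝ)])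
        (ih k (by linarith) (by linarith) (by linarith))

theorem integral_shiftedJacobi_mul_shiftedJacobi_self_pos (n : ℕ) (ha : -1 < a) (hb : -1 < b)
    (hc : -1 < c) :
    0 < ∫ y, (shiftedJacobi n c b * shiftedJacobi n a b).eval y ∂jacobiMeasure a b := by
  induction n generalizing a b c with
  | zero =>
    simp only [shiftedJacobi_zero ha hb, shiftedJacobi_zero hc hb, mul_one, eval_one,
      integral_const, smul_eq_mul, jacobiMeasure_real_univ_pos ha hb]
  | succ n ih =>
    refine (mul_pos_iff_of_pos_left n.cast_add_one_pos).1 ?_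
    rw [succ_mul_integral_shiftedJacobi_succ_mul_shiftedJacobi_succ n n ha hb]
    exact mul_pos (by linarith [n.cast_nonneg (α := ℝ)])
      (ih (by linarith) (by linarith) (by linarith))

/-- The shifted Jacobi polynomials `P_n^{(a,b)}(1 - 2y)` for `a, b > -1`, as a sequence with one
polynomial of each degree. -/
noncomputable def shiftedJacobiSequence (ha : -1 < a) (hb : -1 < b) : Polynomial.Sequence ℝ where
  elems' n := shiftedJacobi n a b
  degree_eq' n := degree_shiftedJacobi n ha hb

theorem pairwise_integral_shiftedJacobi_mul_shiftedJacobi_eq_zero (ha : -1 < a) (hb : -1 < b) :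
    Pairwise fun m n =>
      ∫ y, (shiftedJacobi m a b).eval y * (shiftedJacobi n a b).eval y ∂jacobiMeasure a b = 0 := by
  intro m n hmn
  simp only [← eval_mul]
  wlog h : m < n generalizing m n
  · rw [mul_comm]
    exact this hmn.symm (by lia)
  · refine integral_mul_shiftedJacobi_eq_zero ha hb ?_
    rw [degree_shiftedJacobi m ha hb]
    exact_mod_cast h

end ConnectionIntegrals

section Transfer

variable {a b c : ℝ}

theorem integral_jacobiMeasure_eq_integral_rpow_sub_mul (a b c : ℝ) (h : ℝ → ℝ) :
    ∫ y, h y ∂jacobiMeasure a b = ∫ y, y ^ (a - c) * h y ∂jacobiMeasure c b := by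
  have := integral_jacobiMeasure_add c b (a - c) 0 h
  simpa only [add_sub_cancel, add_zero, rpow_zero, mul_one] using this

theorem memLp_two_rpow_mul_eval {r : ℝ} (hr : -1 < c + 2 * r) (hb : -1 < b) (p : ℝ[X]) :
    MemLp (fun y => y ^ r * p.eval y) 2 (jacobiMeasure c b) := by
  have hmeas : Measurable fun y => y ^ r * p.eval y :=
    (measurable_id.pow_const r).mul p.continuous.measurable
  rw [memLp_two_iff_integrable_sq hmeas.aestronglyMeasurable]
  have hint := integrable_eval_jacobiMeasure hr hb (p ^ 2)
  rw [← add_zero b, integrable_jacobiMeasure_add_iff] at hint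
  refine hint.congr ((ae_mem_Ioo_jacobiMeasure c b).mono fun y hy => ?_)
  simp only [eval_pow, rpow_zero, mul_one, two_mul, rpow_add hy.1]
  ring

theorem integral_mul_shiftedJacobi_pos_of_lt_two_mul_sub (hb : -1 < b) (hac : a ≤ c)
    (h2ac : -1 < 2 * a - c) {g : ℝ → ℝ} (hg : MemLp g 2 (jacobiMeasure c b))
    (hpos : ∀ k, 0 < ∫ y, g y * (shiftedJacobi k c b).eval y ∂jacobiMeasure c b) (n : ℕ) :
    0 < ∫ y, g y * (shiftedJacobi n a b).eval y ∂jacobiMeasure a b := by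
  have ha : -1 < a := by linarith
  have hc : -1 < c := ha.trans_le hac
  have := isFiniteMeasure_jacobiMeasure hc hb
  let P : ℕ → ℝ → ℝ := fun k y => (shiftedJacobi k c b).eval y
  let Q : ℝ → ℝ := fun y => y ^ (a - c) * (shiftedJacobi n a b).eval y
  have hQ : MemLp Q 2 (jacobiMeasure c b) :=
    memLp_two_rpow_mul_eval (by linarith) hb (shiftedJacobi n a b)
  have hPQ : ∀ k, ∫ y, P k y * Q y ∂jacobiMeasure c b =
      ∫ y, (shiftedJacobi k c b * shiftedJacobi n a b).eval y ∂jacobiMeasure a b := fun k => by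
    rw [integral_jacobiMeasure_eq_integral_rpow_sub_mul a b c]
    simp only [P, Q, eval_mul, mul_left_comm]
  have hPP : ∀ k, 0 < ∫ y, P k y * P k y ∂jacobiMeasure c b := fun k => by
    simpa only [eval_mul] using integral_shiftedJacobi_mul_shiftedJacobi_self_pos k hc hb hc
  have hsum : HasSum (fun k => (∫ y, g y * P k y ∂jacobiMeasure c b) *
      (∫ y, P k y * Q y ∂jacobiMeasure c b) / ∫ y, P k y * P k y ∂jacobiMeasure c b)
      (∫ y, g y * Q y ∂jacobiMeasure c b) :=
    hasSum_integral_mul_integral_div_integral_sq (ae_mem_Icc_jacobiMeasure c b)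
      (shiftedJacobiSequence hc hb)
      (pairwise_integral_shiftedJacobi_mul_shiftedJacobi_eq_zero hc hb)
      (fun k => (hPP k).ne') hg hQ
  calc (0 : ℝ) < ∫ y, g y * Q y ∂jacobiMeasure c b := by
        rw [← hsum.tsum_eq]
        refine hsum.summable.tsum_pos (fun k => ?_) n ?_
        · rw [hPQ]
          exact div_nonneg (mul_nonneg (hpos k).le
            (integral_shiftedJacobi_mul_shiftedJacobi_nonneg k n ha hb hac)) (hPP k).le
        · rw [hPQ]
          exact div_pos (mul_pos (hpos n)
            (integral_shiftedJacobi_mul_shiftedJacobi_self_pos n ha hb hc)) (hPP n)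
    _ = ∫ y, g y * (shiftedJacobi n a b).eval y ∂jacobiMeasure a b := by
        rw [integral_jacobiMeasure_eq_integral_rpow_sub_mul a b c]
        simp only [Q, mul_left_comm]

theorem integral_mul_shiftedJacobi_pos (ha : -1 < a) (hb : -1 < b) (hac : a ≤ c) {g : ℝ → ℝ}
    (hg : MemLp g 2 (jacobiMeasure a b))
    (hpos : ∀ k, 0 < ∫ y, g y * (shiftedJacobi k c b).eval y ∂jacobiMeasure c b) (n : ℕ) :
    0 < ∫ y, g y * (shiftedJacobi n a b).eval y ∂jacobiMeasure a b := by
  have ha' : 0 < a + 1 := neg_lt_iff_pos_add.1 ha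
  obtain ⟨m, hm⟩ := pow_unbounded_of_one_lt ((c + 1) / (a + 1)) (by norm_num : (1 : ℝ) < 3 / 2)
  rw [div_lt_iff₀ ha'] at hm
  induction m generalizing c with
  | zero =>
    rw [pow_zero, one_mul] at hm
    exact absurd hac (by linarith)
  | succ m ih =>
    -- The factor `2 / 3` is any number in `(1 / 2, 1)`: `c' + 1 > (c + 1) / 2` is what makes
    -- `y ^ (c' - c)` square integrable for `jacobiMeasure c b`.
    let c' := max a ((c + 1) * (2 / 3) - 1)
    have hac' : a ≤ c' := le_max_left _ _
    have hc' : (c + 1) * (2 / 3) - 1 ≤ c' := le_max_right _ _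
    have hc'c : c' ≤ c := max_le hac (by linarith)
    have hpos' := integral_mul_shiftedJacobi_pos_of_lt_two_mul_sub hb hc'c
      (by linarith) (hg.mono_measure (jacobiMeasure_antitone_left hac b)) hpos
    rcases max_choice a ((c + 1) * (2 / 3) - 1) with h | h
    · rw [show c' = a from h] at hpos'
      exact hpos' n
    · refine ih hac' hpos' ?_
      rw [pow_succ] at hm
      linarith

end Transfer

section TrigonometricSubstitution

theorem bijOn_one_sub_cos_div_two :
    BijOn (fun θ => (1 - cos θ) / 2) (Ioo 0 π) (Ioo 0 1) := by
  refine InvOn.bijOn (f' := fun y => arccos (1 - 2 * y)) ⟨fun θ hθ => ?_, fun y hy => ?_⟩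
    (fun θ hθ => ?_) fun y hy => ?_
  · simp only [mul_div_cancel₀ (1 - cos θ) (two_ne_zero (α := ℝ)), sub_sub_cancel,
      arccos_cos hθ.1.le hθ.2.le]
  · simp only [cos_arccos (x := 1 - 2 * y) (by linarith [hy.2]) (by linarith [hy.1])]
    ring
  · have hcos := mapsTo_cos_Ioo hθ
    constructor <;> linarith [hcos.1, hcos.2]
  · exact ⟨arccos_pos.2 (by linarith [hy.1]), arccos_lt_pi.2 (by linarith [hy.2])⟩

theorem abs_sin_div_two_mul_jacobiWeight (α β : ℝ) {θ : ℝ} (hθ : θ ∈ Ioo 0 π) :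
    |sin θ / 2| * (((1 - cos θ) / 2) ^ (α - 1 / 2) * (1 - (1 - cos θ) / 2) ^ (β - 1 / 2)) =
      sin (θ / 2) ^ (2 * α) * cos (θ / 2) ^ (2 * β) := by
  have hs : 0 < sin (θ / 2) := sin_pos_of_mem_Ioo ⟨by linarith [hθ.1], by linarith [hθ.1, hθ.2]⟩
  have hc : 0 < cos (θ / 2) := cos_pos_of_mem_Ioo ⟨by linarith [hθ.1, hθ.2], by linarith [hθ.2]⟩
  have hθ2 : 2 * (θ / 2) = θ := by ring
  have hsin : sin θ / 2 = sin (θ / 2) * cos (θ / 2) := by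
    rw [← hθ2, sin_two_mul, hθ2]
    ring
  have hcos₁ : (1 - cos θ) / 2 = sin (θ / 2) ^ (2 : ℝ) := by
    rw [rpow_two, sin_sq_eq_half_sub, hθ2]
    ring
  have hcos₂ : 1 - (1 - cos θ) / 2 = cos (θ / 2) ^ (2 : ℝ) := by
    rw [hcos₁, rpow_two, rpow_two, cos_sq']
  rw [hcos₂, hcos₁, hsin, abs_of_pos (mul_pos hs hc), ← rpow_mul hs.le, ← rpow_mul hc.le,
    show 2 * α = 2 * (α - 1 / 2) + 1 by ring, show 2 * β = 2 * (β - 1 / 2) + 1 by ring,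
    rpow_add_one hs.ne', rpow_add_one hc.ne']
  ring

theorem integral_jacobiMeasure_eq_integral_cos (α β : ℝ) (h : ℝ → ℝ) :
    ∫ y, h y ∂jacobiMeasure (α - 1 / 2) (β - 1 / 2) =
      ∫ θ in Ioo 0 π, h ((1 - cos θ) / 2) * (sin (θ / 2) ^ (2 * α) * cos (θ / 2) ^ (2 * β)) := by
  have hderiv : ∀ θ ∈ Ioo 0 π,
      HasDerivWithinAt (fun θ => (1 - cos θ) / 2) (sin θ / 2) (Ioo 0 π) θ := fun θ _ =>
    (((hasDerivAt_cos θ).const_sub 1).div_const 2).congr_deriv (by rw [neg_neg])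
      |>.hasDerivWithinAt
  rw [integral_jacobiMeasure, ← bijOn_one_sub_cos_div_two.image_eq,
    integral_image_eq_integral_abs_deriv_smul measurableSet_Ioo hderiv
      bijOn_one_sub_cos_div_two.injOn]
  refine setIntegral_congr_fun measurableSet_Ioo fun θ hθ => ?_
  simp only [smul_eq_mul, ← abs_sin_div_two_mul_jacobiWeight α β hθ]
  ring

/-- The kernel `(t - θ)₊ ^ δ` of `FJ`, in the variable `y = (1 - cos θ) / 2`. -/
noncomputable def truncatedPower (δ t y : ℝ) : ℝ :=
  (Iio t).indicator (fun θ => (t - θ) ^ δ) (arccos (1 - 2 * y))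

theorem memLp_truncatedPower {δ : ℝ} (hδ : 0 ≤ δ) (t : ℝ) (q : ENNReal) (μ : Measure ℝ)
    [IsFiniteMeasure μ] : MemLp (truncatedPower δ t) q μ := by
  have hmeas : Measurable (truncatedPower δ t) :=
    ((by fun_prop : Measurable fun θ : ℝ => (t - θ) ^ δ).indicator measurableSet_Iio).comp
      (measurable_arccos.comp (by fun_prop))
  refine MemLp.of_bound hmeas.aestronglyMeasurable (|t| ^ δ) (ae_of_all _ fun y => ?_)
  rw [truncatedPower]
  by_cases hy : arccos (1 - 2 * y) ∈ Iio t
  · have hty : 0 ≤ t - arccos (1 - 2 * y) := sub_nonneg.2 (le_of_lt hy)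
    rw [indicator_of_mem hy, norm_of_nonneg (rpow_nonneg hty δ)]
    exact rpow_le_rpow hty (by linarith [arccos_nonneg (1 - 2 * y), le_abs_self t]) hδ
  · rw [indicator_of_notMem hy, norm_zero]
    exact rpow_nonneg (abs_nonneg t) δ

theorem FJ_eq_integral_truncatedPower_mul_shiftedJacobi (n : ℕ) (α β δ : ℝ) {t : ℝ}
    (ht : t ∈ Ioc 0 π) :
    FJ n α β δ t = ∫ y, truncatedPower δ t y * (shiftedJacobi n (α - 1 / 2) (β - 1 / 2)).eval y
      ∂jacobiMeasure (α - 1 / 2) (β - 1 / 2) := by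
  have hinter : Ioo 0 π ∩ Iio t = Ioo 0 t := by
    rw [Ioo_inter_Iio, min_eq_right ht.2]
  rw [FJ, intervalIntegral.integral_of_le ht.1.le, integral_Ioc_eq_integral_Ioo,
    integral_jacobiMeasure_eq_integral_cos, ← hinter, ← setIntegral_indicator measurableSet_Iio]
  refine setIntegral_congr_fun measurableSet_Ioo fun θ hθ => ?_
  have hcos : 1 - 2 * ((1 - cos θ) / 2) = cos θ := by ring
  simp only [truncatedPower, eval_shiftedJacobi, hcos, arccos_cos hθ.1.le hθ.2.le]
  by_cases hθt : θ ∈ Iio t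
  · simp only [indicator_of_mem hθt, mul_assoc]
  · simp only [indicator_of_notMem hθt, zero_mul]

end TrigonometricSubstitution

theorem FJ_pos_transfer_alpha_general (β γ α : ℝ) (hβ : -1 / 2 < β) (hα : -1 / 2 < α)
    (hαγ : α ≤ γ) (δ : ℝ) (hδ : 0 ≤ δ) (t : ℝ) (ht : t ∈ Ioc 0 π)
    (hpos : ∀ n : ℕ, 0 < FJ n γ β δ t) (n : ℕ) : 0 < FJ n α β δ t := by
  have hα' : -1 < α - 1 / 2 := by linarith
  have hβ' : -1 < β - 1 / 2 := by linarith
  have := isFiniteMeasure_jacobiMeasure hα' hβ'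
  simp only [FJ_eq_integral_truncatedPower_mul_shiftedJacobi _ _ _ _ ht] at hpos ⊢
  exact integral_mul_shiftedJacobi_pos hα' hβ' (by linarith) (memLp_truncatedPower hδ t 2 _) hpos n

theorem FJ_pos_transfer_alpha (β γ α : ℝ) (hβ : -1/2 < β) (hγ : -1/2 < γ)
    (hα : -1/2 < α) (hαγ : (γ - 1) / 2 < α) (hαγ' : α < γ) (δ : ℝ) (hδ : 0 < δ)
    (t : ℝ) (ht : t ∈ Set.Ioc (0:ℝ) π)
    (hpos : ∀ n : ℕ, 0 < FJ n γ β δ t) :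
    ∀ n : ℕ, 0 < FJ n α β δ t :=
  FJ_pos_transfer_alpha_general β γ α hβ hα hαγ'.le δ hδ.le t ht hpos
end
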